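/- arXiv:1812.11294 — 7 statements merged into one kernel-verified Lean document; each statement's English description precedes it below -/
import Mathlib

section
/- Let p be an odd prime, K a finite field of characteristic p, and n ≥ 1. Let s ∈ SO(M) be semisimple, i.e. the order of s is coprime to p. Then for every natural number i, the matrix s^(p^i) is conjugate in SO(M) to the Frobenius twist σ(s): there exists a matrix h over K with hᵀ * M * h = M and det h = 1 such that s^(p^i) * h = h * σ(s). (In particular σ(s) again lies in SO(M).) -/
open Matrix

open LinearMap (BilinForm)

/-!
The space splits as an orthogonal sum of nondegenerate cyclic subspaces of the semisimple
isometry `s`: a nonisotropic vector `x` generates a cyclic subspace whose radical has an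
`s`-invariant complement, and that complement is again cyclic.

A cyclic piece is a copy of the reduced commutative algebra `A = K[s]`. Taking adjoints is an
involution `τ` of `A`, and the form is `(x, y) ↦ Tr (a * (τ x * y))` for some `a` with
`τ a = a`. For `q = p ^ n = 2 * m + 1`, the semilinear map `x ↦ a ^ m * x ^ q` raises the form to
the power `q`, because `a * (a ^ m) ^ 2 = a ^ q` and the trace commutes with the `q`-th power, and
it intertwines `s` with `s ^ q`. In coordinates this map is the entrywise Frobenius followed by the
conjugating matrix; its determinant is `±1`, and in odd dimension the sign can be corrected by a
scalar.
-/

section Trace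

theorem trace_piSingle {R ι : Type*} [CommRing R] [Finite ι] [DecidableEq ι] {A : ι → Type*}
    [∀ i, CommRing (A i)] [∀ i, Algebra R (A i)] [∀ i, Module.Free R (A i)]
    [∀ i, Module.Finite R (A i)] (i : ι) (x : A i) :
    Algebra.trace R (∀ i, A i) (Pi.single i x) = Algebra.trace R (A i) x := by
  have factor_proj : Algebra.lmul R (∀ i, A i) (Pi.single i x) =
      LinearMap.single R A i ∘ₗ Algebra.lmul R (A i) x ∘ₗ LinearMap.proj i :=
    LinearMap.ext fun y => (Pi.single_mul_left x).symm
  rw [Algebra.trace_apply, factor_proj, LinearMap.trace_comp_comm', LinearMap.comp_assoc,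
    LinearMap.proj_comp_single_same, LinearMap.comp_id, ← Algebra.trace_apply]

variable (K A : Type*) [Field K] [PerfectField K] [CommRing A] [Algebra K A]
  [FiniteDimensional K A] [IsReduced A]

theorem traceForm_nondegenerate_of_isReduced : (Algebra.traceForm K A).Nondegenerate := by
  classical
  have : IsArtinianRing A := .of_finite K A
  have isRefl : (Algebra.traceForm K A).IsRefl := (Algebra.traceForm_isSymm K).isRefl
  refine isRefl.nondegenerate_iff_separatingLeft.2 fun x hx => ?_
  let e := (IsArtinianRing.equivPi A).restrictScalars K
  rw [← map_eq_zero_iff e e.injective]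
  funext m
  let _ := Ideal.Quotient.field m.asIdeal
  refine (traceForm_nondegenerate K (A ⧸ m.asIdeal)).1 _ fun y => ?_
  have trace_eq := hx (e.symm (Pi.single m y))
  rwa [Algebra.traceForm_apply, ← Algebra.trace_eq_of_algEquiv e, map_mul, e.apply_symm_apply,
    ← Pi.single_mul_right, trace_piSingle] at trace_eq

variable (p : ℕ) [ExpChar K p] [ExpChar A p]

include K in
theorem perfectRing_of_isReduced : PerfectRing A p := by
  have : IsArtinianRing A := .of_finite K A
  let e := IsArtinianRing.equivPi A
  refine PerfectRing.ofSurjective A p fun x => ?_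
  have exists_root (m : MaximalSpectrum A) : ∃ y, y ^ p = e x m := by
    let _ := Ideal.Quotient.field m.asIdeal
    have : ExpChar (A ⧸ m.asIdeal) p := expChar_of_injective_algebraMap (algebraMap K _).injective p
    have : PerfectField (A ⧸ m.asIdeal) := Algebra.IsAlgebraic.perfectField (K := K)
    exact surjective_frobenius _ p (e x m)
  choose y hy using exists_root
  exact ⟨e.symm y, by rw [frobenius_def, ← map_pow, e.symm_apply_eq]; exact funext hy⟩

variable {A}

theorem trace_pow_expChar_pow (n : ℕ) (x : A) :
    Algebra.trace K A (x ^ p ^ n) = Algebra.trace K A x ^ p ^ n := by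
  have : PerfectRing A p := perfectRing_of_isReduced K A p
  have trace_eq := Algebra.trace_eq_of_equiv_equiv (iterateFrobeniusEquiv K p n)
    (iterateFrobeniusEquiv A p n)
    (RingHom.ext fun c => (map_pow (algebraMap K A) c (p ^ n))) x
  rw [RingEquiv.eq_symm_apply] at trace_eq
  exact trace_eq.symm

end Trace

/-- `w` is adjoint to `z` for the bilinear form `B` on an algebra: multiplication by `w` is the
adjoint of multiplication by `z`. -/
def IsMulAdjoint {R A : Type*} [CommRing R] [CommRing A] [Algebra R A] (B : BilinForm R A)
    (z w : A) : Prop :=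
  ∀ x y, B (z * x) y = B x (w * y)

namespace IsMulAdjoint

variable {R A : Type*} [CommRing R] [CommRing A] [Algebra R A] {B : BilinForm R A} {z w z' w' : A}

theorem algebraMap_self (r : R) : IsMulAdjoint B (algebraMap R A r) (algebraMap R A r) := by
  intro x y
  simp only [← Algebra.smul_def, map_smul, LinearMap.smul_apply]

theorem add (h : IsMulAdjoint B z w) (h' : IsMulAdjoint B z' w') :
    IsMulAdjoint B (z + z') (w + w') := fun x y => by
  simp only [add_mul, map_add, LinearMap.add_apply, h x y, h' x y]

theorem mul (h : IsMulAdjoint B z w) (h' : IsMulAdjoint B z' w') :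
    IsMulAdjoint B (z * z') (w * w') := fun x y => by
  rw [mul_assoc, h, h', mul_left_comm, mul_assoc]

theorem symm (hB : B.IsSymm) (h : IsMulAdjoint B z w) : IsMulAdjoint B w z := fun x y => by
  rw [hB.eq, ← h, hB.eq]

theorem unique (hB : B.SeparatingRight) (h : IsMulAdjoint B z w) (h' : IsMulAdjoint B z w') :
    w = w' := by
  refine sub_eq_zero.1 (hB _ fun x => ?_)
  rw [map_sub, sub_eq_zero]
  simpa only [mul_one] using (h x 1).symm.trans (h' x 1)

theorem exists_of_mem_adjoin {S : Set A} (hS : ∀ z ∈ S, ∃ w, IsMulAdjoint B z w)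
    (hz : z ∈ Algebra.adjoin R S) : ∃ w, IsMulAdjoint B z w := by
  induction hz using Algebra.adjoin_induction with
  | mem z hz => exact hS z hz
  | algebraMap r => exact ⟨_, algebraMap_self r⟩
  | add _ _ _ _ h h' => exact ⟨_, h.choose_spec.add h'.choose_spec⟩
  | mul _ _ _ _ h h' => exact ⟨_, h.choose_spec.mul h'.choose_spec⟩

theorem exists_algEquiv (hsymm : B.IsSymm) (hB : B.Nondegenerate)
    (hex : ∀ z, ∃ w, IsMulAdjoint B z w) : ∃ τ : A ≃ₐ[R] A, ∀ z, IsMulAdjoint B z (τ z) := by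
  choose τ hτ using hex
  have eq_τ {z w} (h : IsMulAdjoint B z w) : τ z = w := (hτ z).unique hB.2 h
  have τ_commutes (r : R) : τ (algebraMap R A r) = algebraMap R A r :=
    eq_τ (algebraMap_self r)
  let τ' : A →ₐ[R] A :=
    { toFun := τ
      map_one' := by simpa only [map_one] using τ_commutes 1
      map_zero' := by simpa only [map_zero] using τ_commutes 0
      map_add' := fun z z' => eq_τ ((hτ z).add (hτ z'))
      map_mul' := fun z z' => eq_τ ((hτ z).mul (hτ z'))
      commutes' := τ_commutes }
  have τ_involutive : τ'.comp τ' = AlgHom.id R A := AlgHom.ext fun z => eq_τ ((hτ z).symm hsymm)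
  exact ⟨.ofAlgHom τ' τ' τ_involutive τ_involutive, hτ⟩

end IsMulAdjoint

section Hermitian

variable {K A : Type*} [Field K] [PerfectField K] [CommRing A] [Algebra K A]
  [FiniteDimensional K A] [IsReduced A] {B : BilinForm K A}

theorem exists_trace_eq_of_isMulAdjoint (hsymm : B.IsSymm)
    {τ : A ≃ₐ[K] A} (hτ : ∀ z, IsMulAdjoint B z (τ z)) :
    ∃ a, τ a = a ∧ ∀ x y, B x y = Algebra.trace K A (a * (τ x * y)) := by
  have trace_nondeg := traceForm_nondegenerate_of_isReduced K A
  let a := ((Algebra.traceForm K A).toDual trace_nondeg).symm (B 1)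
  have trace_a (y : A) : Algebra.trace K A (a * y) = B 1 y :=
    BilinForm.apply_toDual_symm_apply (hB := trace_nondeg) (B 1) y
  have trace_τ (y : A) : Algebra.trace K A (τ a * y) = Algebra.trace K A (a * y) := by
    obtain ⟨z, rfl⟩ := τ.surjective y
    rw [← map_mul, Algebra.trace_eq_of_algEquiv, trace_a, trace_a, ← mul_one (τ z), ← hτ,
      hsymm.eq, mul_one]
  refine ⟨a, sub_eq_zero.1 (trace_nondeg.1 _ fun y => ?_), fun x y => ?_⟩
  · rw [Algebra.traceForm_apply, sub_mul, map_sub, trace_τ, sub_self]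
  · rw [trace_a, ← hτ, mul_one]

theorem exists_frobenius_semilinear_isometry (p : ℕ) [ExpChar K p] [ExpChar A p] (hp : Odd p)
    (n : ℕ) (hsymm : B.IsSymm) {τ : A ≃ₐ[K] A} (hτ : ∀ z, IsMulAdjoint B z (τ z)) :
    ∃ f : A →ₛₗ[iterateFrobenius K p n] A,
      (∀ x y, B (f x) (f y) = B x y ^ p ^ n) ∧ ∀ z x, f (z * x) = z ^ p ^ n * f x := by
  obtain ⟨a, τ_a, B_eq⟩ := exists_trace_eq_of_isMulAdjoint hsymm hτ
  obtain ⟨m, hm⟩ : Odd (p ^ n) := hp.pow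
  let f := (LinearMap.mulLeft K (a ^ m)).comp (LinearMap.iterateFrobenius K A p n)
  have f_apply (x : A) : f x = a ^ m * x ^ p ^ n := rfl
  have a_pow : a ^ p ^ n = a * a ^ m * a ^ m := by rw [hm]; ring
  refine ⟨f, fun x y => ?_, fun z x => ?_⟩
  · rw [f_apply, f_apply, B_eq, B_eq, ← trace_pow_expChar_pow K p, map_mul τ, map_pow τ, map_pow τ,
      τ_a, mul_pow a, mul_pow (τ x), a_pow]
    ring_nf
  · rw [f_apply, f_apply, mul_pow, mul_left_comm]

end Hermitian

theorem injective_of_isOrthogonal {R V : Type*} [CommRing R] [AddCommGroup V] [Module R V]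
    {B : BilinForm R V} {s : Module.End R V} (hB : B.SeparatingLeft)
    (hs : B.IsOrthogonal s) : Function.Injective s :=
  (injective_iff_map_eq_zero s).2 fun x hx => hB x fun y => by
    rw [← hs, hx, map_zero, LinearMap.zero_apply]

theorem IsMulAdjoint.exists_of_isOrthogonal {K A : Type*} [Field K] [CommRing A] [Algebra K A]
    [FiniteDimensional K A] {B : BilinForm K A} (hB : B.SeparatingLeft) {ζ : A}
    (hζ : B.IsOrthogonal (LinearMap.mulLeft K ζ)) : ∃ w, IsMulAdjoint B ζ w := by
  have mul_injective : Function.Injective (LinearMap.mulLeft K ζ) := injective_of_isOrthogonal hB hζ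
  obtain ⟨w, hw⟩ : ∃ w, ζ * w = 1 := LinearMap.injective_iff_surjective.1 mul_injective 1
  refine ⟨w, fun x y => ?_⟩
  calc B (ζ * x) y = B (ζ * x) (ζ * (w * y)) := by rw [← mul_assoc, hw, one_mul]
    _ = B x (w * y) := hζ x (w * y)

section CyclicSubspace

variable {R V : Type*} [CommRing R] [AddCommGroup V] [Module R V]

/-- The cyclic subspace generated by `v` under the endomorphism `s`, encoded as the smallest
`s`-invariant submodule containing `v`. -/
def cyclicSubspace (s : Module.End R V) (v : V) : Submodule R V :=
  sInf {U | U ∈ s.invtSubmodule ∧ v ∈ U}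

variable {s : Module.End R V} {v : V}

theorem mem_cyclicSubspace_self : v ∈ cyclicSubspace s v :=
  Submodule.mem_sInf.2 fun _ hU => hU.2

theorem cyclicSubspace_le {U : Submodule R V} (hU : U ∈ s.invtSubmodule) (hv : v ∈ U) :
    cyclicSubspace s v ≤ U :=
  sInf_le ⟨hU, hv⟩

theorem cyclicSubspace_mem_invtSubmodule : cyclicSubspace s v ∈ s.invtSubmodule :=
  fun _ hx => Submodule.mem_sInf.2 fun U hU => hU.1 (Submodule.mem_sInf.1 hx U hU)

theorem cyclicSubspace_restrict_eq_top :
    cyclicSubspace (LinearMap.restrict s (cyclicSubspace_mem_invtSubmodule (s := s) (v := v)))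
      ⟨v, mem_cyclicSubspace_self⟩ = ⊤ := by
  set C := cyclicSubspace s v
  refine eq_top_iff.2 fun ⟨x, hx⟩ _ => Submodule.mem_sInf.2 fun D hD => ?_
  have C_le : C ≤ D.map C.subtype := cyclicSubspace_le
    (Module.End.invtSubmodule.map_subtype_mem_of_mem_invtSubmodule s _ hD.1) ⟨_, hD.2, rfl⟩
  obtain ⟨y, hy, rfl⟩ := C_le hx
  exact hy

end CyclicSubspace

section Orthogonal

variable {K V : Type*} [Field K] [AddCommGroup V] [Module K V] [FiniteDimensional K V]
  {B : BilinForm K V} {s : Module.End K V}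

theorem orthogonal_mem_invtSubmodule_of_isOrthogonal (hB : B.SeparatingLeft)
    (hs : B.IsOrthogonal s) {U : Submodule K V} (hU : U ∈ s.invtSubmodule) :
    B.orthogonal U ∈ s.invtSubmodule := by
  have restrict_injective : Function.Injective (s.restrict hU) := fun u u' h =>
    Subtype.ext (injective_of_isOrthogonal hB hs (congrArg Subtype.val h))
  intro y hy u hu
  obtain ⟨u', hu'⟩ := LinearMap.injective_iff_surjective.1 restrict_injective ⟨u, hu⟩
  obtain rfl : s u' = u := congrArg Subtype.val hu'
  exact (hs _ _).trans (hy u' u'.2)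

theorem exists_disjoint_orthogonal_cyclicSubspace (hsymm : B.IsSymm) (hB : B.SeparatingLeft)
    (hs : B.IsOrthogonal s) (hss : s.IsSemisimple) {x : V} (hx : B x x ≠ 0) :
    ∃ c ≠ 0, Disjoint (cyclicSubspace s c) (B.orthogonal (cyclicSubspace s c)) := by
  set U := cyclicSubspace s x
  have U_invt : U ∈ s.invtSubmodule := cyclicSubspace_mem_invtSubmodule
  set R := U ⊓ B.orthogonal U
  have R_invt : R ∈ s.invtSubmodule := Module.End.invtSubmodule.inf_mem U_invt
    (orthogonal_mem_invtSubmodule_of_isOrthogonal hB hs U_invt)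
  obtain ⟨C, C_le, C_invt, disjoint_RC, RC_sup⟩ :=
    (Module.End.isSemisimple_restrict_iff U U_invt).1 (hss.restrict U_invt) R R_invt inf_le_left
  obtain ⟨r, hr, c, hc, rfl⟩ : ∃ r ∈ R, ∃ c ∈ C, r + c = x :=
    Submodule.mem_sup.1 (RC_sup ▸ mem_cyclicSubspace_self)
  have C_eq : cyclicSubspace s c = C := by
    have U_le : U ≤ R ⊔ cyclicSubspace s c := cyclicSubspace_le
      (Module.End.invtSubmodule.sup_mem R_invt cyclicSubspace_mem_invtSubmodule)
      (Submodule.add_mem_sup hr mem_cyclicSubspace_self)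
    refine eq_of_le_of_inf_le_of_le_sup (cyclicSubspace_le C_invt hc) ?_
      ((C_le.trans U_le).trans_eq (sup_comm _ _))
    exact disjoint_RC.symm.le_bot.trans bot_le
  refine ⟨c, ?_, ?_⟩
  · rintro rfl
    rw [add_zero] at hx
    exact hx (hr.2 r hr.1)
  · rw [C_eq, Submodule.disjoint_def]
    intro y hy y_orth
    refine Submodule.disjoint_def.1 disjoint_RC y ⟨C_le hy, fun u hu => ?_⟩ hy
    obtain ⟨r', hr', c', hc', rfl⟩ := Submodule.mem_sup.1 (RC_sup ▸ hu)
    change B (r' + c') y = 0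
    rw [map_add, LinearMap.add_apply, y_orth c' hc', add_zero, hsymm.eq]
    exact hr'.2 y (C_le hy)

end Orthogonal

theorem coe_restrict_pow_apply {R V : Type*} [Semiring R] [AddCommMonoid V] [Module R V]
    {s : Module.End R V} {U : Submodule R V} (hU : ∀ x ∈ U, s x ∈ U) (m : ℕ) (x : U) :
    ((s.restrict hU ^ m) x : V) = (s ^ m) x := by
  rw [Module.End.pow_restrict, LinearMap.coe_restrict_apply]

/-- `B` admits a Frobenius twist along `s`: a `p ^ n`-Frobenius-semilinear map `f` that raises the
values of `B` to the power `p ^ n` and intertwines `s` with `s ^ p ^ n`. In coordinates, where `f`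
is a matrix `h` composed with the entrywise Frobenius, the second condition says that `h` conjugates
`s ^ p ^ n` to the Frobenius twist of `s`. -/
def HasFrobeniusIntertwiner {K V : Type*} [Field K] [AddCommGroup V] [Module K V] (p : ℕ)
    [ExpChar K p] (n : ℕ) (B : BilinForm K V) (s : Module.End K V) : Prop :=
  ∃ f : V →ₛₗ[iterateFrobenius K p n] V,
    (∀ x y, B (f x) (f y) = B x y ^ p ^ n) ∧ ∀ x, f (s x) = (s ^ p ^ n) (f x)

namespace HasFrobeniusIntertwiner

variable {K V : Type*} [Field K] [AddCommGroup V] [Module K V] {B : BilinForm K V}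
  {s : Module.End K V} (p : ℕ) [ExpChar K p] (n : ℕ)

theorem of_subsingleton [Subsingleton V] : HasFrobeniusIntertwiner p n B s := by
  refine ⟨0, fun x y => ?_, fun x => Subsingleton.elim _ _⟩
  rw [Subsingleton.elim x 0, map_zero, map_zero, LinearMap.zero_apply, LinearMap.zero_apply,
    zero_pow (expChar_pow_pos K p n).ne']

variable {p n}

theorem of_isCompl (hB : B.IsSymm) {U W : Submodule K V} (hUW : IsCompl U W)
    (hW : W ≤ B.orthogonal U) (hsU : U ∈ s.invtSubmodule) (hsW : W ∈ s.invtSubmodule)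
    (hU' : HasFrobeniusIntertwiner p n (B.restrict U) (s.restrict hsU))
    (hW' : HasFrobeniusIntertwiner p n (B.restrict W) (s.restrict hsW)) :
    HasFrobeniusIntertwiner p n B s := by
  obtain ⟨f, f_form, f_comm⟩ := hU'
  obtain ⟨g, g_form, g_comm⟩ := hW'
  have orth (u : U) (w : W) : B u w = 0 := hW w.2 u u.2
  have orth' (u : U) (w : W) : B w u = 0 := (hB.eq _ _).trans (orth u w)
  have exists_add (x : V) : ∃ (u : U) (w : W), (u : V) + w = x :=
    have ⟨u, w, h, _⟩ := Submodule.existsUnique_add_of_isCompl hUW x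
    ⟨u, w, h⟩
  let F : V →ₛₗ[iterateFrobenius K p n] V :=
    (U.subtype.comp f).comp (U.projectionOnto W hUW) +
      (W.subtype.comp g).comp (W.projectionOnto U hUW.symm)
  have F_add (u : U) (w : W) : F (u + w) = f u + g w := by simp [F]
  refine ⟨F, fun x y => ?_, fun x => ?_⟩
  · obtain ⟨u, w, rfl⟩ := exists_add x
    obtain ⟨u', w', rfl⟩ := exists_add y
    have f_form' : B (f u) (f u') = B u u' ^ p ^ n := f_form u u'
    have g_form' : B (g w) (g w') = B w w' ^ p ^ n := g_form w w'
    simp only [F_add, map_add, LinearMap.add_apply, orth, orth', f_form', g_form', add_zero,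
      zero_add, add_pow_expChar_pow]
  · obtain ⟨u, w, rfl⟩ := exists_add x
    have f_comm' : (f (s.restrict hsU u) : V) = (s ^ p ^ n) (f u) :=
      (congrArg Subtype.val (f_comm u)).trans (coe_restrict_pow_apply hsU _ _)
    have g_comm' : (g (s.restrict hsW w) : V) = (s ^ p ^ n) (g w) :=
      (congrArg Subtype.val (g_comm w)).trans (coe_restrict_pow_apply hsW _ _)
    rw [map_add s, F_add, map_add (s ^ p ^ n), ← f_comm', ← g_comm']
    exact F_add (s.restrict hsU u) (s.restrict hsW w)

end HasFrobeniusIntertwiner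

section Cyclic

variable {K V : Type*} [Field K] [AddCommGroup V] [Module K V] {s : Module.End K V} {v : V}

theorem bijective_toSpanSingleton_adjoin_of_cyclicSubspace_eq_top (hv : cyclicSubspace s v = ⊤) :
    Function.Bijective (LinearMap.toSpanSingleton (Algebra.adjoin K {s}) V v) := by
  set A := Algebra.adjoin K {s}
  set φ := LinearMap.toSpanSingleton A V v
  let ζ : A := ⟨s, Algebra.self_mem_adjoin_singleton K s⟩
  have range_eq : (LinearMap.range φ).restrictScalars K = ⊤ := by
    refine top_unique (hv.symm.trans_le (cyclicSubspace_le ?_ ⟨1, one_smul A v⟩))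
    exact fun x hx => (LinearMap.range φ).smul_mem ζ hx
  have surj : Function.Surjective φ := fun x =>
    (range_eq ▸ Submodule.mem_top : x ∈ (LinearMap.range φ).restrictScalars K)
  refine ⟨(injective_iff_map_eq_zero _).2 fun a ha => Subtype.ext (LinearMap.ext fun x => ?_), surj⟩
  obtain ⟨b, rfl⟩ := surj x
  change a • (b • v) = 0
  rw [smul_comm, show a • v = 0 from ha, smul_zero]

variable [FiniteDimensional K V]

theorem isReduced_adjoin_of_isSemisimple (hs : s.IsSemisimple) :
    IsReduced (Algebra.adjoin K {s}) :=
  ⟨fun a ha => Subtype.ext <| Module.End.eq_zero_of_isNilpotent_isSemisimple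
    (ha.map (Algebra.adjoin K {s}).val) (hs.of_mem_adjoin_singleton a.2)⟩

theorem HasFrobeniusIntertwiner.of_cyclicSubspace_eq_top [PerfectField K] [Nontrivial V]
    {B : BilinForm K V} {p : ℕ} [ExpChar K p] (hp : Odd p) (n : ℕ) (hsymm : B.IsSymm)
    (hB : B.Nondegenerate) (hs : B.IsOrthogonal s) (hss : s.IsSemisimple)
    (hv : cyclicSubspace s v = ⊤) :
    HasFrobeniusIntertwiner p n B s := by
  set A := Algebra.adjoin K {s}
  have : IsReduced A := isReduced_adjoin_of_isSemisimple hss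
  have : ExpChar A p := expChar_of_injective_algebraMap (algebraMap K A).injective p
  let e : A ≃ₗ[K] V := (LinearEquiv.ofBijective _
    (bijective_toSpanSingleton_adjoin_of_cyclicSubspace_eq_top hv)).restrictScalars K
  have e_mul (a b : A) : e (a * b) = a.1 (e b) := rfl
  let BA := LinearMap.BilinForm.congr e.symm B
  have BA_apply (a b : A) : BA a b = B (e a) (e b) := rfl
  have BA_symm : BA.IsSymm := ⟨fun a b => hsymm.eq (e a) (e b)⟩
  have BA_nondeg : BA.Nondegenerate := hB.congr e.symm
  have exists_adjoint (z : A) : ∃ w, IsMulAdjoint BA z w := by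
    refine IsMulAdjoint.exists_of_mem_adjoin (fun ζ (hζ : ζ.1 = s) => ?_)
      (Algebra.adjoin_adjoin_coe_preimage (R := K) (s := {s}) ▸ Algebra.mem_top)
    refine IsMulAdjoint.exists_of_isOrthogonal BA_nondeg.1 fun a b => ?_
    rw [LinearMap.mulLeft_apply, LinearMap.mulLeft_apply, BA_apply, e_mul, e_mul, hζ, hs, BA_apply]
  obtain ⟨τ, hτ⟩ := IsMulAdjoint.exists_algEquiv BA_symm BA_nondeg exists_adjoint
  obtain ⟨f, f_form, f_mul⟩ := exists_frobenius_semilinear_isometry p hp n BA_symm hτ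
  refine ⟨(e.toLinearMap.comp f).comp e.symm.toLinearMap, fun x y => ?_, fun x => ?_⟩
  · calc B (e (f (e.symm x))) (e (f (e.symm y))) = BA (e.symm x) (e.symm y) ^ p ^ n := f_form _ _
      _ = B x y ^ p ^ n := by rw [BA_apply, e.apply_symm_apply, e.apply_symm_apply]
  · let ζ : A := ⟨s, Algebra.self_mem_adjoin_singleton K s⟩
    have s_apply : e.symm (s x) = ζ * e.symm x := by
      rw [e.symm_apply_eq, e_mul, e.apply_symm_apply]
    calc e (f (e.symm (s x))) = e (ζ ^ p ^ n * f (e.symm x)) := by rw [s_apply, f_mul]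
      _ = (s ^ p ^ n) (e (f (e.symm x))) := rfl

end Cyclic

theorem two_ne_zero_of_expChar_odd (K : Type*) [Field K] {p : ℕ} [hK : ExpChar K p]
    (hp : Odd p) : (2 : K) ≠ 0 := by
  cases hK with
  | zero => exact two_ne_zero
  | prime _ =>
    refine Ring.two_ne_zero ?_
    rw [ringChar.eq K p]
    rintro rfl
    exact absurd hp (by decide)

theorem hasFrobeniusIntertwiner_of_isOrthogonal {K V : Type*} [Field K] [PerfectField K]
    [AddCommGroup V] [Module K V] [FiniteDimensional K V] {p : ℕ} [ExpChar K p] (hp : Odd p)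
    (n : ℕ) {B : BilinForm K V} {s : Module.End K V} (hsymm : B.IsSymm) (hB : B.Nondegenerate)
    (hs : B.IsOrthogonal s) (hss : s.IsSemisimple) :
    HasFrobeniusIntertwiner p n B s := by
  induction hd : Module.finrank K V using Nat.strong_induction_on generalizing V with | _ d ih
  obtain _ | _ := subsingleton_or_nontrivial V
  · exact .of_subsingleton p n
  let _ : Invertible (2 : K) := invertibleOfNonzero (two_ne_zero_of_expChar_odd K hp)
  obtain ⟨x, hx⟩ := LinearMap.BilinForm.exists_bilinForm_self_ne_zero hB.ne_zero
    (LinearMap.BilinForm.isSymm_iff.1 hsymm)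
  obtain ⟨c, hc, disjoint_C⟩ := exists_disjoint_orthogonal_cyclicSubspace hsymm hB.1 hs hss hx
  set C := cyclicSubspace s c
  have C_invt : C ∈ s.invtSubmodule := cyclicSubspace_mem_invtSubmodule
  have C'_invt := orthogonal_mem_invtSubmodule_of_isOrthogonal hB.1 hs C_invt
  have C_compl := (LinearMap.BilinForm.isCompl_orthogonal_iff_disjoint hsymm.isRefl).2 disjoint_C
  have : Nontrivial C := ⟨⟨c, mem_cyclicSubspace_self⟩, 0, fun h => hc (congrArg Subtype.val h)⟩
  refine .of_isCompl hsymm C_compl le_rfl C_invt C'_invt ?_ ?_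
  · exact .of_cyclicSubspace_eq_top hp n (hsymm.restrict C)
      (B.nondegenerate_restrict_of_disjoint_orthogonal hsymm.isRefl disjoint_C)
      (fun x y => hs x y) (hss.restrict C_invt) cyclicSubspace_restrict_eq_top
  · refine ih _ ?_ (hsymm.restrict _)
      (B.nondegenerate_restrict_of_disjoint_orthogonal hsymm.isRefl ?_)
      (fun x y => hs x y) (hss.restrict C'_invt) rfl
    · subst hd
      refine Submodule.finrank_lt fun h => hc ?_
      exact Submodule.disjoint_def.1 disjoint_C c mem_cyclicSubspace_self (h ▸ Submodule.mem_top)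
    · rw [LinearMap.BilinForm.orthogonal_orthogonal hB hsymm.isRefl]
      exact disjoint_C.symm

section MatrixForm

theorem ringHom_comp_piSingle_one {R S ι : Type*} [Semiring R] [Semiring S] [DecidableEq ι]
    (σ : R →+* S) (b : ι) : σ ∘ Pi.single b 1 = Pi.single b 1 := by
  funext j
  rw [Function.comp_apply, Pi.apply_single (fun _ => σ) (fun _ => map_zero σ), map_one]

theorem exists_eq_mulVec_comp_of_semilinear {R S m ι : Type*} [Semiring R] [CommSemiring S]
    [Fintype ι] {σ : R →+* S} (f : (ι → R) →ₛₗ[σ] (m → S)) :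
    ∃ h : Matrix m ι S, ∀ x, f x = h *ᵥ (σ ∘ x) := by
  classical
  refine ⟨.of fun a b => f (Pi.single b 1) a, fun x => ?_⟩
  conv_lhs => rw [pi_eq_sum_univ' x]
  ext a
  simp only [map_sum, map_smulₛₗ, Finset.sum_apply, Pi.smul_apply, smul_eq_mul, mulVec, dotProduct,
    of_apply, Function.comp_apply, mul_comm]

variable {ι : Type*} [Fintype ι] [DecidableEq ι]

theorem HasFrobeniusIntertwiner.exists_matrix {K : Type*} [Field K] {M s : Matrix ι ι K}
    {p n : ℕ} [ExpChar K p]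
    (hs : HasFrobeniusIntertwiner p n (toBilin' M) (toLin' s)) :
    ∃ h : Matrix ι ι K, hᵀ * M * h = (iterateFrobenius K p n).mapMatrix M ∧
      s ^ p ^ n * h = h * (iterateFrobenius K p n).mapMatrix s := by
  obtain ⟨f, f_form, f_comm⟩ := hs
  obtain ⟨h, hf⟩ := exists_eq_mulVec_comp_of_semilinear f
  have f_single (b : ι) : f (Pi.single b 1) = h *ᵥ Pi.single b 1 := by
    rw [hf, ringHom_comp_piSingle_one]
  refine ⟨h, Matrix.ext fun a b => ?_, ext_of_mulVec_single fun b => ?_⟩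
  · rw [← toBilin'_single (hᵀ * M * h), ← toBilin'_comp, BilinForm.comp_apply, toLin'_apply,
      toLin'_apply, ← f_single, ← f_single, f_form, toBilin'_single]
    rfl
  · let σ := iterateFrobenius K p n
    calc (s ^ p ^ n * h) *ᵥ Pi.single b 1 = (toLin' s ^ p ^ n) (f (Pi.single b 1)) := by
          rw [← mulVec_mulVec, ← f_single, ← toLin'_pow, toLin'_apply]
      _ = h *ᵥ (σ ∘ (s *ᵥ Pi.single b 1)) := by rw [← f_comm, hf, toLin'_apply]
      _ = h *ᵥ (σ.mapMatrix s *ᵥ (σ ∘ Pi.single b 1)) :=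
          congrArg (h *ᵥ ·) (funext (σ.map_mulVec s _))
      _ = (h * σ.mapMatrix s) *ᵥ Pi.single b 1 := by
          rw [ringHom_comp_piSingle_one, mulVec_mulVec]

theorem det_eq_one_or_eq_neg_one_of_isometry {R : Type*} [CommRing R] [IsDomain R]
    {M h : Matrix ι ι R} (hM : M.det ≠ 0) (hh : hᵀ * M * h = M) :
    h.det = 1 ∨ h.det = -1 := by
  have det_eq := congrArg det hh
  rw [det_mul, det_mul, det_transpose, mul_right_comm] at det_eq
  exact mul_self_eq_one_iff.1 ((mul_eq_right₀ hM).1 det_eq)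

theorem isOrthogonal_toBilin' {R : Type*} [CommRing R] {M s : Matrix ι ι R}
    (hs : sᵀ * M * s = M) : (toBilin' M).IsOrthogonal (toLin' s) := by
  intro x y
  rw [← BilinForm.comp_apply, toBilin'_comp, hs]

end MatrixForm

theorem isSemisimple_of_pow_eq_one {K V : Type*} [Field K] [AddCommGroup V] [Module K V]
    {s : Module.End K V} {N : ℕ} (hN : (N : K) ≠ 0) (hs : s ^ N = 1) : s.IsSemisimple :=
  Module.End.isSemisimple_of_squarefree_aeval_eq_zero
    (Polynomial.X_pow_sub_one_separable_iff.2 hN).squarefree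
    (by rw [map_sub, map_pow, Polynomial.aeval_X, map_one, hs, sub_self])

theorem isSemisimple_toLin'_of_coprime_orderOf {K ι : Type*} [Field K] [Fintype ι] [DecidableEq ι]
    {p : ℕ} [Fact p.Prime] [CharP K p] {s : Matrix ι ι K} (hs : (orderOf s).Coprime p) :
    Module.End.IsSemisimple (toLin' s) := by
  have order_ne_zero : (orderOf s : K) ≠ 0 := fun h =>
    (Fact.out : p.Prime).coprime_iff_not_dvd.1 hs.symm ((CharP.cast_eq_zero_iff K p _).1 h)
  refine isSemisimple_of_pow_eq_one order_ne_zero ?_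
  rw [← toLin'_pow, pow_orderOf_eq_one, toLin'_one]
  rfl

theorem det_permMatrix_ne_zero {R ι : Type*} [CommRing R] [Nontrivial R] [Fintype ι]
    [DecidableEq ι] (σ : Equiv.Perm ι) : (σ.permMatrix R).det ≠ 0 := by
  rw [det_permutation]
  exact ((Equiv.Perm.sign σ).isUnit.map (Int.castRingHom R)).ne_zero

theorem isSymm_permMatrix_revPerm {R : Type*} [Zero R] [One R] {n : ℕ} :
    ((Fin.revPerm (n := n)).permMatrix R).IsSymm := by
  rw [IsSymm, transpose_permMatrix]
  rfl

theorem eq_permMatrix_revPerm {R : Type*} [Zero R] [One R] {n : ℕ}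
    {M : Matrix (Fin (n + 1)) (Fin (n + 1)) R}
    (hM : ∀ i j, M i j = if (i : ℕ) + (j : ℕ) = n then 1 else 0) :
    M = Fin.revPerm.permMatrix R := by
  ext i j
  simp only [hM, Equiv.Perm.permMatrix, PEquiv.toMatrix_apply, Equiv.toPEquiv_apply,
    Option.mem_some_iff, Fin.revPerm_apply, Fin.ext_iff, Fin.val_rev]
  exact if_congr (by omega) rfl rfl

theorem stmt_0_general {p : ℕ} (hodd : Odd p) {K ι : Type*} [Field K] [PerfectField K]
    [ExpChar K p] [Fintype ι] [DecidableEq ι] (hι : Odd (Fintype.card ι))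
    {M s : Matrix ι ι K} {i : ℕ} (M_symm : M.IsSymm) (M_det : M.det ≠ 0)
    (M_frobenius : M.map (· ^ p ^ i) = M) (hs1 : sᵀ * M * s = M) (hs2 : s.det = 1)
    (hss : Module.End.IsSemisimple (toLin' s)) :
    (s.map fun x => x ^ p ^ i)ᵀ * M * (s.map fun x => x ^ p ^ i) = M ∧
    (s.map fun x => x ^ p ^ i).det = 1 ∧
    ∃ h : Matrix ι ι K,
      hᵀ * M * h = M ∧ h.det = 1 ∧
      s ^ p ^ i * h = h * s.map fun x => x ^ p ^ i := by
  let σ := iterateFrobenius K p i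
  refine ⟨?_, ?_, ?_⟩
  · have twisted := congrArg σ.mapMatrix hs1
    rw [map_mul, map_mul, show σ.mapMatrix M = M from M_frobenius] at twisted
    exact twisted
  · exact (σ.map_det s).symm.trans ((congrArg σ hs2).trans σ.map_one)
  obtain ⟨h, h_isometry, h_comm⟩ := (hasFrobeniusIntertwiner_of_isOrthogonal hodd i
    (isSymm_toBilin'_iff_isSymm.2 M_symm)
    (BilinForm.nondegenerate_toBilin'_iff_det_ne_zero.2 M_det)
    (isOrthogonal_toBilin' hs1) hss).exists_matrix
  replace h_isometry : hᵀ * M * h = M := h_isometry.trans M_frobenius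
  rcases det_eq_one_or_eq_neg_one_of_isometry M_det h_isometry with h_det | h_det
  · exact ⟨h, h_isometry, h_det, h_comm⟩
  · refine ⟨-h, ?_, ?_, ?_⟩
    · rwa [transpose_neg, neg_mul, neg_mul_neg]
    · rw [det_neg, h_det, hι.neg_one_pow, neg_mul_neg, one_mul]
    · rw [mul_neg, neg_mul]
      exact congrArg Neg.neg h_comm

/-- Let `p` be an odd prime, `K` a finite field of characteristic `p`,
`n ≥ 1`, and `M` the antidiagonal Gram matrix of size `2n+1`.  If `s ∈ SO(M)` is
semisimple (its order is coprime to `p`), then for every `i` the matrix `s^(p^i)` is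
conjugate in `SO(M)` to the Frobenius twist `σ(s)` (entrywise `x ↦ x^(p^i)`); in
particular `σ(s)` again lies in `SO(M)`. -/
theorem stmt_0 (p : ℕ) (hp : p.Prime) (hodd : Odd p)
    (K : Type) [Field K] [Fintype K] [CharP K p]
    (n : ℕ) (hn : 1 ≤ n)
    (M : Matrix (Fin (2 * n + 1)) (Fin (2 * n + 1)) K)
    (hM : ∀ i j : Fin (2 * n + 1), M i j = if (i : ℕ) + (j : ℕ) = 2 * n then 1 else 0)
    (s : Matrix (Fin (2 * n + 1)) (Fin (2 * n + 1)) K)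
    (hs1 : sᵀ * M * s = M) (hs2 : s.det = 1)
    (hss : Nat.Coprime (orderOf s) p) (i : ℕ) :
    (s.map fun x => x ^ p ^ i)ᵀ * M * (s.map fun x => x ^ p ^ i) = M ∧
    (s.map fun x => x ^ p ^ i).det = 1 ∧
    ∃ h : Matrix (Fin (2 * n + 1)) (Fin (2 * n + 1)) K,
      hᵀ * M * h = M ∧ h.det = 1 ∧
      s ^ p ^ i * h = h * s.map fun x => x ^ p ^ i := by
  have : Fact p.Prime := ⟨hp⟩
  obtain rfl := eq_permMatrix_revPerm hM
  exact stmt_0_general hodd (by simp) isSymm_permMatrix_revPerm (det_permMatrix_ne_zero _)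
    (PEquiv.map_toMatrix (iterateFrobenius K p i) _) hs1 hs2
    (isSemisimple_toLin'_of_coprime_orderOf hss)
end

section
/- Let p be an odd prime, K a finite field of characteristic p, and n ≥ 1. Let s ∈ SO(M) be semisimple, i.e. the order of s is coprime to p, and let i be a natural number. Then the cyclic subgroups generated by s and by its Frobenius twist σ(s) are conjugate in SO(M): there exists a matrix h over K with hᵀ * M * h = M and det h = 1 such that { h⁻¹ * s^k * h : k ∈ ℕ } = { σ(s)^k : k ∈ ℕ }. -/
open Matrix

/-!
Write `σ` for `x ↦ x ^ q` with `q = p ^ i`, and `B` for the bilinear form of `M`. As `s` is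
semisimple, each simple `K[X]`-module being a field quotient of `K[X]`, there is a bijective
`σ`-semilinear `Ψ` with `Ψ ∘ s = s ^ q ∘ Ψ`. The pulled-back form `σ⁻¹ (B (Ψ x) (Ψ y))` is again
nondegenerate, symmetric and `s`-invariant, and equals `B (a x) y` for some self-adjoint `a`
commuting with `s`.

Where `z = s - s⁻¹` is invertible, the two forms are equivalent through some `c` commuting with `s`.
Indeed the equation `c⋆ a c = 1`, sought for `c = x + y z` with `x`, `y` self-adjoint in the
commutative ring generated by `a` and `z`, reads `a x² - a z² y² = 1`, and such a diagonal binary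
equation is solvable over every finite commutative ring in which `2` is a unit. The eigenspaces of
`s` for `1` and `-1`, where `z` vanishes, split off orthogonally, and there an orthogonal basis does
the job.

The resulting `Φ = Ψ ∘ c` has the form `v ↦ h *ᵥ σ v`, so `h` conjugates `σ(s)` to `s ^ q`, which
generates the same cyclic group as `s` because `q` is coprime to the order of `s`.
-/

section FiniteRing

open Polynomial

theorem isUnit_of_map_of_injective {M N : Type*} [Monoid M] [Finite M] [Monoid N]
    (f : M →* N) (hf : Function.Injective f) {x : M} (hx : IsUnit (f x)) : IsUnit x := by
  refine IsLeftRegular.isUnit_of_finite fun y z hyz ↦ hf <| hx.mul_left_cancel ?_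
  simpa only [map_mul] using congrArg f hyz

theorem isSquare_one_add_of_isNilpotent {R : Type*} [CommRing R] (h2 : IsUnit (2 : R)) {ν : R}
    (hν : IsNilpotent ν) : IsSquare (1 + ν) := by
  obtain ⟨r, ⟨-, hr⟩, -⟩ := existsUnique_nilpotent_sub_and_aeval_eq_zero
    (P := (X ^ 2 - C (1 + ν) : R[X])) (x := (1 : R)) (by simpa using hν.neg)
    (by simpa [one_add_one_eq_two] using h2)
  refine ⟨r, ?_⟩
  simp only [map_sub, map_pow, aeval_X, aeval_C, Algebra.algebraMap_self_apply] at hr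
  linear_combination -hr

theorem exists_mul_sq_add_mul_sq_eq_of_field {F : Type*} [Field F] [Finite F] (h2 : (2 : F) ≠ 0)
    {a b : F} (ha : a ≠ 0) (hb : b ≠ 0) (c : F) : ∃ x y, a * x ^ 2 + b * y ^ 2 = c := by
  have := Fintype.ofFinite F
  have hchar : ringChar F ≠ 2 := fun h ↦ h2 <| by
    exact_mod_cast h ▸ ringChar.Nat.cast_ringChar (R := F)
  obtain ⟨x, y, hxy⟩ := FiniteField.exists_root_sum_quadratic
    (degree_quadratic (b := 0) (c := -c) ha) (degree_C_mul_X_pow 2 hb)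
    (FiniteField.odd_card_of_char_ne_two hchar)
  refine ⟨x, y, ?_⟩
  simp only [map_zero, zero_mul, add_zero, map_neg, eval_add, eval_mul, eval_C, eval_pow, eval_X,
    eval_neg] at hxy
  linear_combination hxy

theorem exists_mul_sq_add_mul_sq_eq_of_isReduced {R : Type*} [CommRing R] [Finite R] [IsReduced R]
    (h2 : IsUnit (2 : R)) {a b : R} (ha : IsUnit a) (hb : IsUnit b) (c : R) :
    ∃ x y, a * x ^ 2 + b * y ^ 2 = c := by
  have hloc (m : MaximalSpectrum R) : ∃ x y : R ⧸ m.asIdeal,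
      (a : R ⧸ m.asIdeal) * x ^ 2 + (b : R ⧸ m.asIdeal) * y ^ 2 = (c : R ⧸ m.asIdeal) := by
    let := Ideal.Quotient.field m.asIdeal
    have : Finite (R ⧸ m.asIdeal) := Quotient.finite _
    exact exists_mul_sq_add_mul_sq_eq_of_field (h2.map (Ideal.Quotient.mk m.asIdeal)).ne_zero
      (ha.map (Ideal.Quotient.mk m.asIdeal)).ne_zero
      (hb.map (Ideal.Quotient.mk m.asIdeal)).ne_zero _
  choose x y hxy using hloc
  let e := IsArtinianRing.equivPi R
  refine ⟨e.symm x, e.symm y, e.injective <| funext fun m ↦ ?_⟩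
  have mk_symm (w : ∀ m : MaximalSpectrum R, R ⧸ m.asIdeal) :
      Ideal.Quotient.mk m.asIdeal (e.symm w) = w m := congrFun (e.apply_symm_apply w) m
  simpa [e, mk_symm] using hxy m

theorem exists_mul_sq_add_mul_sq_eq {R : Type*} [CommRing R] [Finite R]
    (h2 : IsUnit (2 : R)) {a b c : R} (ha : IsUnit a) (hb : IsUnit b) (hc : IsUnit c) :
    ∃ x y, a * x ^ 2 + b * y ^ 2 = c := by
  let π := Ideal.Quotient.mk (nilradical R)
  have : IsReduced (R ⧸ nilradical R) :=
    (Ideal.isRadical_iff_quotient_reduced _).1 (Ideal.radical_isRadical _)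
  have : Finite (R ⧸ nilradical R) := Quotient.finite _
  obtain ⟨x, y, hxy⟩ :=
    exists_mul_sq_add_mul_sq_eq_of_isReduced (h2.map π) (ha.map π) (hb.map π) (π c)
  obtain ⟨x, rfl⟩ := Ideal.Quotient.mk_surjective x
  obtain ⟨y, rfl⟩ := Ideal.Quotient.mk_surjective y
  have hν : IsNilpotent (c - (a * x ^ 2 + b * y ^ 2)) := by
    rw [← mem_nilradical, ← Ideal.Quotient.eq_zero_iff_mem]
    simp [hxy, π]
  obtain ⟨u, hu⟩ : IsUnit (a * x ^ 2 + b * y ^ 2) := by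
    simpa using hν.neg.isUnit_add_left_of_commute hc (Commute.all _ _)
  obtain ⟨r, hr⟩ := isSquare_one_add_of_isNilpotent h2
    ((Commute.all (↑u⁻¹ : R) _).isNilpotent_mul_left hν)
  refine ⟨r * x, r * y, ?_⟩
  calc a * (r * x) ^ 2 + b * (r * y) ^ 2 = r * r * (a * x ^ 2 + b * y ^ 2) := by ring
    _ = c := by rw [← hr, ← hu]; linear_combination (c - u) * u.inv_mul

theorem exists_star_mul_self_mul_eq_one {R : Type*} [CommRing R] [StarRing R] [Finite R]
    (h2 : IsUnit (2 : R)) {a z : R} (ha : IsSelfAdjoint a) (hau : IsUnit a) (hz : star z = -z)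
    (hzu : IsUnit z) : ∃ c, star c * a * c = 1 := by
  have isUnit_of_val (x : selfAdjoint R) (hx : IsUnit (x : R)) : IsUnit x :=
    isUnit_of_map_of_injective ⟨⟨((↑) : selfAdjoint R → R), rfl⟩, fun _ _ ↦ rfl⟩
      Subtype.val_injective hx
  let α : selfAdjoint R := ⟨a, ha⟩
  let δ : selfAdjoint R := ⟨z ^ 2, by simp [selfAdjoint.mem_iff, hz]⟩
  obtain ⟨x, y, hxy⟩ := exists_mul_sq_add_mul_sq_eq (a := α) (b := -(α * δ)) (c := 1)
    (isUnit_of_val 2 h2) (isUnit_of_val α hau)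
    (isUnit_of_val _ (hau.mul (hzu.pow 2)).neg) isUnit_one
  refine ⟨x + y * z, ?_⟩
  have hxy' : a * (x : R) ^ 2 + -(a * z ^ 2) * (y : R) ^ 2 = 1 := congrArg Subtype.val hxy
  simp only [star_add, star_mul, hz, x.2.star_eq, y.2.star_eq]
  linear_combination hxy'

open scoped IsMulCommutative in
theorem exists_star_mul_mul_eq_one_of_commute {R : Type*} [Ring R] [StarRing R] [Finite R]
    (h2 : IsUnit (2 : R)) {a z : R} (ha : IsSelfAdjoint a) (hau : IsUnit a) (hz : star z = -z)
    (hzu : IsUnit z) (haz : Commute a z) :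
    ∃ c, star c * a * c = 1 ∧ ∀ s, Commute s a → Commute s z → Commute s c := by
  let S : StarSubalgebra ℤ R := StarAlgebra.adjoin ℤ {a, z}
  have : IsMulCommutative S := StarAlgebra.isMulCommutative_adjoin ℤ
    (by rintro x (rfl | rfl) y (rfl | rfl) <;> simp [haz.eq])
    (by rintro x (rfl | rfl) y (rfl | rfl) <;> simp [haz.eq, hz, ha.star_eq])
  have isUnit_of_val (x : S) (hx : IsUnit (x : R)) : IsUnit x :=
    isUnit_of_map_of_injective (S.subtype : S →* R) Subtype.val_injective hx
  let α : S := ⟨a, StarAlgebra.subset_adjoin ℤ _ (by simp)⟩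
  let ζ : S := ⟨z, StarAlgebra.subset_adjoin ℤ _ (by simp)⟩
  obtain ⟨c, hc⟩ := exists_star_mul_self_mul_eq_one (a := α) (z := ζ) (isUnit_of_val 2 h2)
    (Subtype.ext ha) (isUnit_of_val α hau) (Subtype.ext hz) (isUnit_of_val ζ hzu)
  refine ⟨c, congrArg Subtype.val hc, fun s hsa hsz ↦ ?_⟩
  have hs : s ∈ StarSubalgebra.centralizer ℤ {a, z} := by
    simp [StarSubalgebra.mem_centralizer_iff, ha.star_eq, hz, hsa.eq, hsz.eq]
  exact ((StarSubalgebra.mem_centralizer_iff ℤ).1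
    (StarAlgebra.adjoin_le_centralizer_centralizer ℤ {a, z} c.2) s hs).1

end FiniteRing

section InvariantForms

variable {K V : Type*} [Field K] [AddCommGroup V] [Module K V]
variable {B B' : LinearMap.BilinForm K V} {s : Module.End K V}

theorem eq_of_forall_bilinForm_eq (hB : B.Nondegenerate) {u v : V} (h : ∀ y, B u y = B v y) :
    u = v :=
  LinearMap.ker_eq_bot.1 hB.ker_eq_bot (LinearMap.ext h)

variable [FiniteDimensional K V]

/-- The involution of `End K V` taking adjoints with respect to a nondegenerate symmetric bilinear
form. It is not an instance because it depends on the form. -/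
@[reducible]
noncomputable def adjointStarRing (B : LinearMap.BilinForm K V) (hB : B.Nondegenerate)
    (hsymm : B.IsSymm) : StarRing (Module.End K V) where
  star φ := B.leftAdjointOfNondegenerate hB φ
  star_involutive φ := B.compLeft_injective hB <| LinearMap.ext₂ fun x y ↦ by
    have adj := B.isAdjointPairLeftAdjointOfNondegenerate hB
    simp only [LinearMap.BilinForm.compLeft_apply, adj _ x, hsymm.eq x, adj φ y]
    exact hsymm.eq _ _
  star_mul φ ψ := B.compLeft_injective hB <| LinearMap.ext₂ fun x y ↦ by
    have adj := B.isAdjointPairLeftAdjointOfNondegenerate hB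
    simp only [LinearMap.BilinForm.compLeft_apply, Module.End.mul_apply, adj _ _ _]
  star_add φ ψ := B.compLeft_injective hB <| LinearMap.ext₂ fun x y ↦ by
    have adj := B.isAdjointPairLeftAdjointOfNondegenerate hB
    simp only [LinearMap.BilinForm.compLeft_apply, LinearMap.add_apply, map_add, adj _ _ _]

theorem isUnit_of_bilinForm_apply_apply (hB : B.Nondegenerate)
    (hs : ∀ x y, B (s x) (s y) = B x y) : IsUnit s := by
  refine (LinearMap.isUnit_iff_ker_eq_bot _).2 (LinearMap.ker_eq_bot.2 fun x y h ↦ ?_)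
  exact eq_of_forall_bilinForm_eq hB fun v ↦ by rw [← hs, h, hs]

theorem isUnit_symmCompOfNondegenerate (hB : B.Nondegenerate) (hB' : B'.Nondegenerate) :
    IsUnit (B'.symmCompOfNondegenerate B hB) := by
  refine (LinearMap.isUnit_iff_ker_eq_bot _).2 (LinearMap.ker_eq_bot.2 fun x y h ↦ ?_)
  refine eq_of_forall_bilinForm_eq hB' fun v ↦ ?_
  rw [← B'.symmCompOfNondegenerate_left_apply hB, h, B'.symmCompOfNondegenerate_left_apply hB]

theorem commute_symmCompOfNondegenerate (hB : B.Nondegenerate)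
    (hs : ∀ x y, B (s x) (s y) = B x y) (hs' : ∀ x y, B' (s x) (s y) = B' x y) :
    Commute s (B'.symmCompOfNondegenerate B hB) := by
  refine LinearMap.ext fun x ↦ eq_of_forall_bilinForm_eq hB fun y ↦ ?_
  have hsurj := ((Module.End.isUnit_iff _).1 (isUnit_of_bilinForm_apply_apply hB hs)).surjective
  obtain ⟨y, rfl⟩ := hsurj y
  rw [Module.End.mul_apply, Module.End.mul_apply, hs, B'.symmCompOfNondegenerate_left_apply,
    B'.symmCompOfNondegenerate_left_apply, hs']

theorem exists_commute_bilinForm_apply_apply_eq [Finite K] (h2 : (2 : K) ≠ 0)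
    (hB : B.Nondegenerate) (hsymm : B.IsSymm) (hB' : B'.Nondegenerate) (hsymm' : B'.IsSymm)
    (hs : ∀ x y, B (s x) (s y) = B x y) (hs' : ∀ x y, B' (s x) (s y) = B' x y)
    (hsub : IsUnit (s - 1)) (hadd : IsUnit (s + 1)) :
    ∃ c, Commute s c ∧ ∀ x y, B' (c x) (c y) = B x y := by
  let := adjointStarRing B hB hsymm
  have adj (φ : Module.End K V) (x y : V) : B (star φ x) y = B x (φ y) :=
    B.isAdjointPairLeftAdjointOfNondegenerate hB φ x y
  have : Finite V := Module.finite_of_finite K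
  have : Finite (Module.End K V) := DFunLike.finite _
  let a : Module.End K V := B'.symmCompOfNondegenerate B hB
  have ha_apply (x y : V) : B (a x) y = B' x y := B'.symmCompOfNondegenerate_left_apply hB y x
  have ha : IsSelfAdjoint a := LinearMap.ext fun x ↦ eq_of_forall_bilinForm_eq hB fun y ↦ by
    rw [adj, hsymm.eq, ha_apply, ha_apply, hsymm'.eq]
  have hsa : Commute s a := commute_symmCompOfNondegenerate hB hs hs'
  have hsa' : Commute (star s) a := by simpa only [ha.star_eq] using hsa.star_star
  have star_mul_s : star s * s = 1 :=
    LinearMap.ext fun x ↦ eq_of_forall_bilinForm_eq hB fun y ↦ (adj s (s x) y).trans (hs x y)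
  have s_mul_star : s * star s = 1 := mul_eq_one_comm.1 star_mul_s
  let z := s - star s
  have hz : IsUnit z := by
    have hz_eq : z = star s * ((s - 1) * (s + 1)) :=
      calc z = star s * s * s - star s := by rw [star_mul_s, one_mul]
        _ = star s * ((s - 1) * (s + 1)) := by noncomm_ring
    rw [hz_eq]
    exact (IsUnit.of_mul_eq_one s star_mul_s).mul (hsub.mul hadd)
  have h2' : IsUnit (2 : Module.End K V) := by
    simpa only [map_ofNat] using (IsUnit.mk0 _ h2).map (algebraMap K (Module.End K V))
  obtain ⟨c, hc, hcomm⟩ := exists_star_mul_mul_eq_one_of_commute h2' ha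
    (isUnit_symmCompOfNondegenerate hB hB') (show star z = -z by simp [z]) hz
    (hsa.symm.sub_right hsa'.symm)
  refine ⟨c, hcomm s hsa ((Commute.refl s).sub_right (s_mul_star.trans star_mul_s.symm)),
    fun x y ↦ ?_⟩
  calc B' (c x) (c y) = B ((star c * a * c) x) y := by
        rw [← ha_apply, ← adj, Module.End.mul_apply, Module.End.mul_apply]
    _ = B x y := by rw [hc, Module.End.one_apply]

end InvariantForms

section Semilinear

open Polynomial

variable {p : ℕ} [Fact p.Prime]

theorem exists_injective_semilinear_of_isSimpleModule (R V : Type*) [CommRing R] [CharP R p]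
    [AddCommGroup V] [Module R V] [IsSimpleModule R V] (i : ℕ) :
    ∃ Ψ : V →ₛₗ[iterateFrobenius R p i] V, Function.Injective Ψ := by
  obtain ⟨I, hI, ⟨e⟩⟩ := isSimpleModule_iff_quot_maximal.1 ‹IsSimpleModule R V›
  let := Ideal.Quotient.field I
  have : CharP (R ⧸ I) p := (CharP.charP_iff_prime_eq_zero Fact.out).2 <| by
    rw [← map_natCast (Ideal.Quotient.mk I), CharP.cast_eq_zero, map_zero]
  let F : R ⧸ I →ₛₗ[iterateFrobenius R p i] R ⧸ I :=
    { iterateFrobenius (R ⧸ I) p i with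
      map_smul' := fun r x ↦ by
        simp [Algebra.smul_def, iterateFrobenius_def, mul_pow] }
  exact ⟨e.symm.toLinearMap.comp (F.comp e.toLinearMap),
    e.symm.injective.comp ((iterateFrobenius (R ⧸ I) p i).injective.comp e.injective)⟩

theorem exists_injective_semilinear_of_isSemisimpleModule (R V : Type*) [CommRing R] [CharP R p]
    [AddCommGroup V] [Module R V] [IsSemisimpleModule R V] (i : ℕ) :
    ∃ Ψ : V →ₛₗ[iterateFrobenius R p i] V, Function.Injective Ψ := by
  obtain ⟨S, e, -, hS⟩ := IsSemisimpleModule.exists_linearEquiv_dfinsupp R V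
  choose Ψ hΨ using fun W : S ↦
    have := hS W
    exists_injective_semilinear_of_isSimpleModule (p := p) R W.1 i
  let F : (Π₀ W : S, W.1) →ₛₗ[iterateFrobenius R p i] Π₀ W : S, W.1 :=
    { DFinsupp.mapRange.addMonoidHom fun W ↦ (Ψ W).toAddMonoidHom with
      map_smul' := fun r x ↦ by ext; simp }
  have hF : Function.Injective F :=
    (DFinsupp.mapRange_injective _ fun W ↦ (Ψ W).map_zero).2 hΨ
  exact ⟨e.symm.toLinearMap.comp (F.comp e.toLinearMap),
    e.symm.injective.comp (hF.comp e.injective)⟩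

theorem exists_injective_semilinear_apply_apply {K V : Type*} [Field K] [CharP K p]
    [AddCommGroup V] [Module K V] {s : Module.End K V} (hs : s.IsSemisimple) (i : ℕ) :
    ∃ Ψ : V →ₛₗ[iterateFrobenius K p i] V, Function.Injective Ψ ∧
      ∀ v, Ψ (s v) = (s ^ p ^ i) (Ψ v) := by
  have : IsSemisimpleModule K[X] (Module.AEval' s) := hs
  obtain ⟨Ψ, hΨ⟩ :=
    exists_injective_semilinear_of_isSemisimpleModule (p := p) K[X] (Module.AEval' s) i
  let e := Module.AEval'.of s
  have smul_eq_C_smul (r : K) (x : Module.AEval' s) : r • x = (C r : K[X]) • x :=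
    (Module.AEval.C_smul s r x).symm
  let F : V →ₛₗ[iterateFrobenius K p i] V :=
    { e.symm.toAddMonoidHom.comp (Ψ.toAddMonoidHom.comp e.toAddMonoidHom) with
      map_smul' := fun r v ↦ e.injective <| by
        simp [smul_eq_C_smul, iterateFrobenius_def, -Module.AEval.C_smul] }
  refine ⟨F, e.symm.injective.comp (hΨ.comp e.injective), fun v ↦ ?_⟩
  have F_apply (v : V) : e (F v) = Ψ (e v) := e.apply_symm_apply _
  apply e.injective
  rw [F_apply, ← Module.AEval'.X_smul_of, map_smulₛₗ, iterateFrobenius_def, ← F_apply,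
    Module.AEval'.X_pow_smul_of, Module.End.smul_def]

end Semilinear

section Decomposition

variable {K V : Type*} [Field K] [AddCommGroup V] [Module K V]

theorem isSemisimple_of_pow_eq_one_s1 {s : Module.End K V} {m : ℕ} (hm : (m : K) ≠ 0)
    (hs : s ^ m = 1) : s.IsSemisimple :=
  Module.End.isSemisimple_of_squarefree_aeval_eq_zero
    (Polynomial.separable_X_pow_sub_C 1 hm one_ne_zero).squarefree (by simp [hs])

theorem isCompl_ker_range_of_isSemisimple [FiniteDimensional K V] {f : Module.End K V}
    (hf : f.IsSemisimple) : IsCompl (LinearMap.ker f) (LinearMap.range f) := by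
  obtain ⟨W, hW, hcompl⟩ := Module.End.isSemisimple_iff.1 hf (LinearMap.ker f)
    fun x hx ↦ by simp [LinearMap.mem_ker.1 hx]
  have range_le : LinearMap.range f ≤ W := by
    rintro - ⟨x, rfl⟩
    obtain ⟨y, z, hy, hz, rfl⟩ := Submodule.codisjoint_iff_exists_add_eq.1 hcompl.codisjoint x
    simpa [LinearMap.mem_ker.1 hy] using hW hz
  have hdisj := hcompl.disjoint.mono_right range_le
  refine ⟨hdisj, codisjoint_iff.2 (Submodule.eq_top_of_disjoint _ _ ?_ hdisj)⟩
  rw [add_comm, f.finrank_range_add_finrank_ker]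

variable {B : LinearMap.BilinForm K V} {s : Module.End K V}

theorem bilinForm_pow_apply_pow_apply (hs : ∀ x y, B (s x) (s y) = B x y) (k : ℕ) (x y : V) :
    B ((s ^ k) x) ((s ^ k) y) = B x y := by
  induction k with
  | zero => rfl
  | succ k ih => rw [pow_succ', Module.End.mul_apply, Module.End.mul_apply, hs, ih]

theorem bilinForm_eq_zero_of_mem_ker_of_mem_range (hs : ∀ x y, B (s x) (s y) = B x y) {ε : K}
    (hε : ε * ε = 1) {x y : V} (hx : x ∈ LinearMap.ker (s - algebraMap K _ ε))
    (hy : y ∈ LinearMap.range (s - algebraMap K _ ε)) : B x y = 0 := by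
  obtain ⟨y, rfl⟩ := hy
  have hsx : s x = ε • x := by
    simpa [sub_eq_zero, Module.algebraMap_end_apply] using LinearMap.mem_ker.1 hx
  have hsy : ε * B x (s y) = B x y := by
    rw [← hs x y, hsx, map_smul, LinearMap.smul_apply, smul_eq_mul]
  simp only [LinearMap.sub_apply, Module.algebraMap_end_apply, map_sub, map_smul, smul_eq_mul]
  linear_combination ε * hsy - B x (s y) * hε

theorem nondegenerate_restrict_of_isCompl (hB : B.Nondegenerate) (hsymm : B.IsSymm)
    {W W' : Submodule K V} (h : IsCompl W W') (horth : ∀ x ∈ W, ∀ y ∈ W', B x y = 0) :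
    (B.restrict W).Nondegenerate := by
  refine B.nondegenerate_restrict_of_disjoint_orthogonal hsymm.isRefl ?_
  refine Submodule.disjoint_def.2 fun x hx hx' ↦ hB.1 x fun y ↦ ?_
  obtain ⟨y, z, hy, hz, rfl⟩ := Submodule.codisjoint_iff_exists_add_eq.1 h.codisjoint y
  rw [map_add, hsymm.eq, hx' y hy, horth x hx z hz, add_zero]

end Decomposition

section FrobeniusTwist

variable {K V : Type*} [Field K] [AddCommGroup V] [Module K V]
variable {p : ℕ} [Fact p.Prime] [CharP K p] {i : ℕ}

/-- A Frobenius-semilinear map `Φ` twists `(B, s)` if it intertwines `s` with `s ^ p ^ i` and is an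
isometry from `B` to `B` up to the Frobenius of the values. In coordinates it is a matrix `h` with
`hᵀ M h = σ(M)` and `h σ(s) = s ^ p ^ i h`. -/
structure IsFrobeniusTwist (B : LinearMap.BilinForm K V) (s : Module.End K V)
    (Φ : V →ₛₗ[iterateFrobenius K p i] V) : Prop where
  map_apply (v : V) : Φ (s v) = (s ^ p ^ i) (Φ v)
  apply_apply (x y : V) : B (Φ x) (Φ y) = B x y ^ p ^ i

variable {B : LinearMap.BilinForm K V} {s : Module.End K V}

theorem bilinForm_sum_smul_of_iIsOrtho {ι : Type*} [Fintype ι] {b : ι → V} (hb : B.iIsOrtho b)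
    (f g : ι → K) :
    B (∑ j, f j • b j) (∑ j, g j • b j) = ∑ j, f j * g j * B (b j) (b j) := by
  simp only [map_sum, LinearMap.sum_apply, map_smul, LinearMap.smul_apply, smul_eq_mul]
  refine Finset.sum_congr rfl fun j _ ↦ ?_
  rw [Finset.sum_eq_single_of_mem j (Finset.mem_univ j)]
  · ring
  · intro k _ hkj
    have : B (b k) (b j) = 0 := hb hkj
    simp [this]

theorem two_ne_zero_of_odd_charP (hodd : Odd p) : (2 : K) ≠ 0 := by
  have not_dvd : ¬ p ∣ 2 := fun h ↦ by
    have hp2 : p = 2 := (Nat.prime_dvd_prime_iff_eq Fact.out Nat.prime_two).1 h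
    exact absurd (hp2 ▸ hodd) (by decide)
  exact ((CharP.isUnit_ofNat_iff Fact.out).2 not_dvd).ne_zero

theorem exists_semilinear_bilinForm_apply_apply_eq_pow [FiniteDimensional K V] (hodd : Odd p)
    (hsymm : B.IsSymm) :
    ∃ Φ : V →ₛₗ[iterateFrobenius K p i] V, ∀ x y, B (Φ x) (Φ y) = B x y ^ p ^ i := by
  have := invertibleOfNonzero (two_ne_zero_of_odd_charP (K := K) hodd)
  obtain ⟨b, hb⟩ :=
    LinearMap.BilinForm.exists_orthogonal_basis (LinearMap.BilinForm.isSymm_iff.1 hsymm)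
  obtain ⟨t, ht⟩ : Odd (p ^ i) := hodd.pow
  let κ j := B (b j) (b j) ^ t
  let Φ : V →ₛₗ[iterateFrobenius K p i] V := ∑ j,
    (LinearMap.toSpanSingleton K V (κ j • b j)).comp
      ((iterateFrobenius K p i).toSemilinearMap.comp (b.coord j))
  have hΦ (v : V) : Φ v = ∑ j, (b.repr v j ^ p ^ i * κ j) • b j := by
    simp [Φ, LinearMap.sum_apply, iterateFrobenius_def, mul_smul]
  refine ⟨Φ, fun x y ↦ ?_⟩
  calc B (Φ x) (Φ y)
      = ∑ j, b.repr x j ^ p ^ i * κ j * (b.repr y j ^ p ^ i * κ j) * B (b j) (b j) := by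
        rw [hΦ, hΦ, bilinForm_sum_smul_of_iIsOrtho hb]
    _ = ∑ j, (b.repr x j * b.repr y j * B (b j) (b j)) ^ p ^ i := by
        refine Finset.sum_congr rfl fun j _ ↦ ?_
        rw [mul_pow, mul_pow, ht, pow_succ (B _ _), mul_comm 2, pow_mul (B _ _)]
        ring
    _ = B x y ^ p ^ i := by
        rw [← sum_pow_char_pow, ← bilinForm_sum_smul_of_iIsOrtho hb, b.sum_repr, b.sum_repr]

theorem exists_isFrobeniusTwist_algebraMap [FiniteDimensional K V] (hodd : Odd p)
    (hsymm : B.IsSymm) (ε : K) :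
    ∃ Φ : V →ₛₗ[iterateFrobenius K p i] V, IsFrobeniusTwist B (algebraMap K _ ε) Φ := by
  obtain ⟨Φ, hΦ⟩ := exists_semilinear_bilinForm_apply_apply_eq_pow (i := i) hodd hsymm
  refine ⟨Φ, fun v ↦ ?_, hΦ⟩
  rw [← map_pow, Module.algebraMap_end_apply, Module.algebraMap_end_apply, map_smulₛₗ,
    iterateFrobenius_def]

theorem exists_isFrobeniusTwist_of_isCompl (hsymm : B.IsSymm) {W W' : Submodule K V}
    (h : IsCompl W W') (horth : ∀ x ∈ W, ∀ y ∈ W', B x y = 0)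
    (hW : ∀ x ∈ W, s x ∈ W) (hW' : ∀ x ∈ W', s x ∈ W')
    {Φ : W →ₛₗ[iterateFrobenius K p i] W} (hΦ : IsFrobeniusTwist (B.restrict W) (s.restrict hW) Φ)
    {Φ' : W' →ₛₗ[iterateFrobenius K p i] W'}
    (hΦ' : IsFrobeniusTwist (B.restrict W') (s.restrict hW') Φ') :
    ∃ Ψ : V →ₛₗ[iterateFrobenius K p i] V, IsFrobeniusTwist B s Ψ := by
  let Ψ : V →ₛₗ[iterateFrobenius K p i] V :=
    W.subtype.comp (Φ.comp (W.projectionOnto W' h)) +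
      W'.subtype.comp (Φ'.comp (W'.projectionOnto W h.symm))
  have Ψ_add (x : W) (y : W') : Ψ (x + y) = Φ x + Φ' y := by simp [Ψ]
  have exists_add (v : V) : ∃ (x : W) (y : W'), (x : V) + y = v := by
    obtain ⟨x, y, hx, hy, rfl⟩ := Submodule.codisjoint_iff_exists_add_eq.1 h.codisjoint v
    exact ⟨⟨x, hx⟩, ⟨y, hy⟩, rfl⟩
  have apply_add (x x' : W) (y y' : W') : B (x + y) (x' + y') = B x x' + B y y' := by
    simp [horth x x.2 y' y'.2, hsymm.eq y x', horth x' x'.2 y y.2]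
  refine ⟨Ψ, fun v ↦ ?_, fun v w ↦ ?_⟩
  · obtain ⟨x, y, rfl⟩ := exists_add v
    have hx : (Φ (s.restrict hW x) : V) = (s ^ p ^ i) (Φ x) := by
      rw [hΦ.map_apply, Module.End.pow_restrict, LinearMap.coe_restrict_apply]
    have hy : (Φ' (s.restrict hW' y) : V) = (s ^ p ^ i) (Φ' y) := by
      rw [hΦ'.map_apply, Module.End.pow_restrict, LinearMap.coe_restrict_apply]
    rw [Ψ_add, map_add (s ^ p ^ i), ← hx, ← hy, ← Ψ_add, map_add s, LinearMap.coe_restrict_apply,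
      LinearMap.coe_restrict_apply]
  · obtain ⟨x, y, rfl⟩ := exists_add v
    obtain ⟨x', y', rfl⟩ := exists_add w
    have hx : B (Φ x) (Φ x') = B x x' ^ p ^ i := hΦ.apply_apply x x'
    have hy : B (Φ' y) (Φ' y') = B y y' ^ p ^ i := hΦ'.apply_apply y y'
    rw [Ψ_add, Ψ_add, apply_add, apply_add, hx, hy, add_pow_char_pow]

theorem exists_isFrobeniusTwist_of_range [FiniteDimensional K V] (hodd : Odd p) (hsymm : B.IsSymm)
    (hss : s.IsSemisimple) (hs : ∀ x y, B (s x) (s y) = B x y) {ε : K} (hε : ε * ε = 1)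
    (hrange : ∀ x ∈ LinearMap.range (s - algebraMap K _ ε),
      s x ∈ LinearMap.range (s - algebraMap K _ ε))
    {Φ : LinearMap.range (s - algebraMap K _ ε) →ₛₗ[iterateFrobenius K p i]
      LinearMap.range (s - algebraMap K _ ε)}
    (hΦ : IsFrobeniusTwist (B.restrict _) (s.restrict hrange) Φ) :
    ∃ Ψ : V →ₛₗ[iterateFrobenius K p i] V, IsFrobeniusTwist B s Ψ := by
  let E := LinearMap.ker (s - algebraMap K _ ε)
  have s_apply : ∀ x ∈ E, s x = ε • x := fun x hx ↦ by
    rwa [← Module.End.mem_eigenspace_iff, Module.End.eigenspace_def]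
  have hE : ∀ x ∈ E, s x ∈ E := fun x hx ↦ s_apply x hx ▸ E.smul_mem ε hx
  have scalar : s.restrict hE = algebraMap K _ ε :=
    LinearMap.ext fun x ↦ Subtype.ext (s_apply x x.2)
  obtain ⟨Ψ, hΨ⟩ :=
    exists_isFrobeniusTwist_algebraMap (p := p) (i := i) hodd (hsymm.restrict E) ε
  exact exists_isFrobeniusTwist_of_isCompl hsymm
    (isCompl_ker_range_of_isSemisimple (Module.End.isSemisimple_sub_algebraMap_iff.2 hss))
    (fun x hx y hy ↦ bilinForm_eq_zero_of_mem_ker_of_mem_range hs hε hx hy) hE hrange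
    (scalar ▸ hΨ) hΦ

end FrobeniusTwist

section FrobeniusPullback

variable {K V : Type*} [Field K] [AddCommGroup V] [Module K V]
variable {p : ℕ} [Fact p.Prime] [CharP K p] [PerfectRing K p] {i : ℕ}

/-- The pullback of `B` along a Frobenius-semilinear map `Ψ`, namely `σ⁻¹ (B (Ψ x) (Ψ y))`; undoing
the Frobenius `σ` on the values makes it bilinear. -/
noncomputable def frobeniusPullback (B : LinearMap.BilinForm K V)
    (Ψ : V →ₛₗ[iterateFrobenius K p i] V) : LinearMap.BilinForm K V :=
  LinearMap.mk₂ K (fun x y ↦ (iterateFrobeniusEquiv K p i).symm (B (Ψ x) (Ψ y)))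
    (fun x x' y ↦ by simp only [map_add, LinearMap.add_apply])
    (fun r x y ↦ by
      rw [map_smulₛₗ, map_smul, LinearMap.smul_apply, smul_eq_mul, map_mul, smul_eq_mul,
        ← coe_iterateFrobeniusEquiv, RingEquiv.symm_apply_apply])
    (fun x y y' ↦ by simp only [map_add])
    (fun r x y ↦ by
      rw [map_smulₛₗ, map_smul, smul_eq_mul, map_mul, smul_eq_mul,
        ← coe_iterateFrobeniusEquiv, RingEquiv.symm_apply_apply])

variable {B : LinearMap.BilinForm K V} {Ψ : V →ₛₗ[iterateFrobenius K p i] V}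

theorem frobeniusPullback_apply (x y : V) :
    frobeniusPullback B Ψ x y = (iterateFrobeniusEquiv K p i).symm (B (Ψ x) (Ψ y)) := rfl

theorem frobeniusPullback_apply_pow (x y : V) :
    frobeniusPullback B Ψ x y ^ p ^ i = B (Ψ x) (Ψ y) :=
  (iterateFrobeniusEquiv K p i).apply_symm_apply _

theorem isSymm_frobeniusPullback (hsymm : B.IsSymm) : (frobeniusPullback B Ψ).IsSymm :=
  ⟨fun x y ↦ by rw [frobeniusPullback_apply, frobeniusPullback_apply, hsymm.eq]⟩

theorem nondegenerate_frobeniusPullback (hB : B.Nondegenerate) (hΨ : Function.Bijective Ψ) :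
    (frobeniusPullback B Ψ).Nondegenerate := by
  have eq_zero_of_apply {v : V} (hv : Ψ v = 0) : v = 0 := hΨ.injective (hv.trans Ψ.map_zero.symm)
  refine ⟨fun x hx ↦ eq_zero_of_apply (hB.1 _ fun y ↦ ?_),
    fun x hx ↦ eq_zero_of_apply (hB.2 _ fun y ↦ ?_)⟩ <;>
  · obtain ⟨y, rfl⟩ := hΨ.surjective y
    exact (EmbeddingLike.map_eq_zero_iff (f := (iterateFrobeniusEquiv K p i).symm)).1 (hx y)

end FrobeniusPullback

section ExistsIsFrobeniusTwist

variable {K : Type*} [Field K] [Finite K] {p : ℕ} [Fact p.Prime] [CharP K p] {i : ℕ}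

theorem exists_isFrobeniusTwist_of_isUnit {V : Type*} [AddCommGroup V] [Module K V]
    [FiniteDimensional K V] {B : LinearMap.BilinForm K V} {s : Module.End K V} (hodd : Odd p)
    (hB : B.Nondegenerate) (hsymm : B.IsSymm) (hss : s.IsSemisimple)
    (hs : ∀ x y, B (s x) (s y) = B x y) (hsub : IsUnit (s - 1)) (hadd : IsUnit (s + 1)) :
    ∃ Φ : V →ₛₗ[iterateFrobenius K p i] V, IsFrobeniusTwist B s Φ := by
  obtain ⟨Ψ, hΨ, Ψ_map⟩ := exists_injective_semilinear_apply_apply (p := p) hss i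
  have : Finite V := Module.finite_of_finite K
  have hs' (x y : V) : frobeniusPullback B Ψ (s x) (s y) = frobeniusPullback B Ψ x y := by
    rw [frobeniusPullback_apply, frobeniusPullback_apply, Ψ_map, Ψ_map,
      bilinForm_pow_apply_pow_apply hs]
  obtain ⟨c, hc, hBc⟩ := exists_commute_bilinForm_apply_apply_eq
    (two_ne_zero_of_odd_charP hodd) hB hsymm
    (nondegenerate_frobeniusPullback hB (Finite.injective_iff_bijective.1 hΨ))
    (isSymm_frobeniusPullback hsymm) hs hs' hsub hadd
  refine ⟨Ψ.comp c, fun v ↦ ?_, fun x y ↦ ?_⟩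
  · rw [LinearMap.comp_apply, LinearMap.comp_apply, ← Module.End.mul_apply, ← hc.eq,
      Module.End.mul_apply, Ψ_map]
  · rw [← hBc x y, frobeniusPullback_apply_pow, LinearMap.comp_apply, LinearMap.comp_apply]

theorem exists_isFrobeniusTwist {V : Type*} [AddCommGroup V] [Module K V]
    [FiniteDimensional K V] {B : LinearMap.BilinForm K V} {s : Module.End K V} (hodd : Odd p)
    (hB : B.Nondegenerate) (hsymm : B.IsSymm) (hss : s.IsSemisimple)
    (hs : ∀ x y, B (s x) (s y) = B x y) :
    ∃ Φ : V →ₛₗ[iterateFrobenius K p i] V, IsFrobeniusTwist B s Φ := by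
  by_cases! h : ∃ ε : K, ε * ε = 1 ∧ ¬ IsUnit (s - algebraMap K _ ε)
  · obtain ⟨ε, hε, hns⟩ := h
    let W := LinearMap.range (s - algebraMap K _ ε)
    have hW : ∀ x ∈ W, s x ∈ W := by
      rintro - ⟨x, rfl⟩
      exact ⟨s x, by simp [Module.algebraMap_end_apply]⟩
    have hcompl := isCompl_ker_range_of_isSemisimple
      (Module.End.isSemisimple_sub_algebraMap_iff.2 hss : (s - algebraMap K _ ε).IsSemisimple)
    have hBW : (B.restrict W).Nondegenerate :=
      nondegenerate_restrict_of_isCompl hB hsymm hcompl.symm fun x hx y hy ↦ by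
        rw [hsymm.eq, bilinForm_eq_zero_of_mem_ker_of_mem_range hs hε hy hx]
    have hsW (x y : W) : B.restrict W (s.restrict hW x) (s.restrict hW y) = B.restrict W x y :=
      hs x y
    have finrank_lt : Module.finrank K W < Module.finrank K V :=
      Submodule.finrank_lt fun hr ↦ hns ((LinearMap.isUnit_iff_range_eq_top _).2 hr)
    obtain ⟨Φ, hΦ⟩ :=
      exists_isFrobeniusTwist hodd hBW (hsymm.restrict W) (hss.restrict (hp := hW)) hsW
    exact exists_isFrobeniusTwist_of_range hodd hsymm hss hs hε hW hΦ
  · refine exists_isFrobeniusTwist_of_isUnit hodd hB hsymm hss hs ?_ ?_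
    · simpa using h 1 (one_mul 1)
    · simpa using h (-1) (by ring)
termination_by Module.finrank K V
decreasing_by exact finrank_lt

end ExistsIsFrobeniusTwist

section Conjugation

theorem range_conj_pow_eq_range_pow {G : Type*} [Monoid G] {u : Gˣ} {s t : G} {q : ℕ}
    (hq : q.Coprime (orderOf s)) (h : SemiconjBy (u : G) t (s ^ q)) :
    (Set.range fun k : ℕ ↦ ↑u⁻¹ * s ^ k * u) = Set.range fun k : ℕ ↦ t ^ k := by
  have conj_pow (k : ℕ) : ↑u⁻¹ * s ^ (q * k) * u = t ^ k := by
    rw [mul_assoc, pow_mul, ← (h.pow_right k).eq, u.inv_mul_cancel_left]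
  obtain ⟨m, hm⟩ := exists_pow_eq_self_of_coprime hq
  refine Set.Subset.antisymm ?_ ?_
  · rintro - ⟨k, rfl⟩
    exact ⟨m * k, by simp only [← conj_pow, ← mul_assoc q, pow_mul, hm]⟩
  · rintro - ⟨k, rfl⟩
    exact ⟨q * k, conj_pow k⟩

theorem semilinearMap_apply_eq_mulVec {m n R S : Type*} [Fintype n] [DecidableEq n] [CommSemiring R]
    [CommSemiring S] {σ : R →+* S} (Φ : (n → R) →ₛₗ[σ] (m → S)) (v : n → R) :
    Φ v = Matrix.of (fun a b ↦ Φ (Pi.single b 1) a) *ᵥ (σ ∘ v) := by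
  ext a
  conv_lhs => rw [pi_eq_sum_univ' v]
  simp [mulVec, dotProduct, mul_comm]

variable {ι K : Type*} [Fintype ι] [DecidableEq ι] [Field K] {M s : Matrix ι ι K}

theorem det_eq_one_or_eq_neg_one_of_transpose_mul_mul_eq (hM : M.det ≠ 0)
    {h : Matrix ι ι K} (hh : hᵀ * M * h = M) : h.det = 1 ∨ h.det = -1 := by
  have hdet := congrArg det hh
  rw [det_mul, det_mul, det_transpose] at hdet
  exact mul_self_eq_one_iff.1 <| mul_right_cancel₀ hM (by linear_combination hdet)

variable {p : ℕ} [Fact p.Prime] [CharP K p]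

theorem exists_transpose_mul_mul_eq_map_pow [Finite K] (hodd : Odd p) (hM : M.IsSymm)
    (hdet : M.det ≠ 0) (hs : sᵀ * M * s = M) (hcop : (orderOf s).Coprime p) (i : ℕ) :
    ∃ h : Matrix ι ι K, hᵀ * M * h = M.map (· ^ p ^ i) ∧
      SemiconjBy h (s.map (· ^ p ^ i)) (s ^ p ^ i) := by
  have cast_orderOf_ne_zero : (orderOf s : K) ≠ 0 := fun h0 ↦
    (Nat.Prime.coprime_iff_not_dvd Fact.out).1 hcop.symm ((CharP.cast_eq_zero_iff K p _).1 h0)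
  have hss : Module.End.IsSemisimple (toLin' s) := by
    refine isSemisimple_of_pow_eq_one_s1 cast_orderOf_ne_zero ?_
    rw [← toLin'_pow, pow_orderOf_eq_one, toLin'_one, Module.End.one_eq_id]
  obtain ⟨Φ, hΦ⟩ := exists_isFrobeniusTwist (p := p) (i := i) (B := toBilin' M) hodd
    (LinearMap.BilinForm.nondegenerate_toBilin'_of_det_ne_zero' M hdet)
    (isSymm_toBilin'_iff_isSymm.2 hM) hss
    fun x y ↦ by rw [← LinearMap.BilinForm.comp_apply, toBilin'_comp, hs]
  let h : Matrix ι ι K := of fun a b ↦ Φ (Pi.single b 1) a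
  have h_single (b : ι) : h *ᵥ Pi.single b 1 = Φ (Pi.single b 1) := mulVec_single_one h b
  refine ⟨h, ?_, ?_⟩
  · ext a b
    calc (hᵀ * M * h) a b = toBilin' (hᵀ * M * h) (Pi.single a 1) (Pi.single b 1) :=
          (toBilin'_single _ a b).symm
      _ = toBilin' M (h *ᵥ Pi.single a 1) (h *ᵥ Pi.single b 1) := by
          rw [← toBilin'_comp, LinearMap.BilinForm.comp_apply, toLin'_apply, toLin'_apply]
      _ = M a b ^ p ^ i := by rw [h_single, h_single, hΦ.apply_apply, toBilin'_single]
  · refine Matrix.ext_of_mulVec_single fun b ↦ ?_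
    calc (h * s.map (· ^ p ^ i)) *ᵥ Pi.single b 1
        = h *ᵥ (iterateFrobenius K p i ∘ (s *ᵥ Pi.single b 1)) := by
          rw [← mulVec_mulVec, mulVec_single_one, mulVec_single_one]; rfl
      _ = (s ^ p ^ i * h) *ᵥ Pi.single b 1 := by
          rw [← semilinearMap_apply_eq_mulVec, ← toLin'_apply s, hΦ.map_apply, ← toLin'_pow,
            toLin'_apply, ← h_single, mulVec_mulVec]

theorem exists_det_eq_one_transpose_mul_mul_eq [Finite K] (hodd : Odd p)
    (hcard : Odd (Fintype.card ι)) (hM : M.IsSymm) (hdet : M.det ≠ 0) {i : ℕ}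
    (hMi : M.map (· ^ p ^ i) = M) (hs : sᵀ * M * s = M) (hcop : (orderOf s).Coprime p) :
    ∃ h : Matrix ι ι K, hᵀ * M * h = M ∧ h.det = 1 ∧
      SemiconjBy h (s.map (· ^ p ^ i)) (s ^ p ^ i) := by
  obtain ⟨h, hh, hconj⟩ := exists_transpose_mul_mul_eq_map_pow hodd hM hdet hs hcop i
  rw [hMi] at hh
  obtain h_det | h_det := det_eq_one_or_eq_neg_one_of_transpose_mul_mul_eq hdet hh
  · exact ⟨h, hh, h_det, hconj⟩
  · refine ⟨-h, ?_, ?_, hconj.neg_left⟩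
    · rwa [transpose_neg, neg_mul, neg_mul_neg]
    · rw [det_neg, h_det, hcard.neg_one_pow, neg_mul_neg, one_mul]

end Conjugation

section Antidiagonal

theorem antidiagonal_mul_self {R : Type*} [NonAssocSemiring R] {m : ℕ}
    {M : Matrix (Fin (m + 1)) (Fin (m + 1)) R}
    (hM : ∀ i j, M i j = if (i : ℕ) + j = m then 1 else 0) : M * M = 1 := by
  have hM' : M = Equiv.Perm.permMatrix R Fin.revPerm := by
    ext i j
    have key : (i : ℕ) + j = m ↔ i.rev = j := by grind [Fin.ext_iff]
    simp [hM, key, PEquiv.toMatrix_apply]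
  have revPerm_mul_self : (Fin.revPerm * Fin.revPerm : Equiv.Perm (Fin (m + 1))) = 1 :=
    Equiv.ext Fin.rev_rev
  rw [hM', ← permMatrix_mul, revPerm_mul_self, permMatrix_one]

end Antidiagonal

theorem stmt_1_general {p : ℕ} [Fact p.Prime] (hodd : Odd p) {K ι : Type*} [Field K] [Finite K]
    [CharP K p] [Fintype ι] [DecidableEq ι] (hcard : Odd (Fintype.card ι)) {M s : Matrix ι ι K}
    (hM : M.IsSymm) (hdet : M.det ≠ 0) {i : ℕ} (hMi : M.map (· ^ p ^ i) = M)
    (hs : sᵀ * M * s = M) (hcop : (orderOf s).Coprime p) :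
    ∃ h : Matrix ι ι K, hᵀ * M * h = M ∧ h.det = 1 ∧
      (Set.range fun k : ℕ ↦ h⁻¹ * s ^ k * h) =
        Set.range fun k : ℕ ↦ (s.map fun x ↦ x ^ p ^ i) ^ k := by
  obtain ⟨h, hh, h_det, hconj⟩ :=
    exists_det_eq_one_transpose_mul_mul_eq hodd hcard hM hdet hMi hs hcop
  obtain ⟨u, rfl⟩ : IsUnit h := (isUnit_iff_isUnit_det h).2 (h_det ▸ isUnit_one)
  refine ⟨u, hh, h_det, ?_⟩
  simpa only [coe_units_inv] using range_conj_pow_eq_range_pow (hcop.pow_right i).symm hconj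

/-- Let `p` be an odd prime, `K` a finite field of characteristic `p`,
`n ≥ 1`, and `M` the antidiagonal Gram matrix of size `2n+1`.  If `s ∈ SO(M)` is
semisimple (its order is coprime to `p`) and `i` is a natural number, then the cyclic
subgroups generated by `s` and by its Frobenius twist `σ(s)` (entrywise `x ↦ x^(p^i)`)
are conjugate in `SO(M)`. -/
theorem stmt_1 (p : ℕ) (hp : p.Prime) (hodd : Odd p)
    (K : Type) [Field K] [Fintype K] [CharP K p]
    (n : ℕ) (hn : 1 ≤ n)
    (M : Matrix (Fin (2 * n + 1)) (Fin (2 * n + 1)) K)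
    (hM : ∀ i j : Fin (2 * n + 1), M i j = if (i : ℕ) + (j : ℕ) = 2 * n then 1 else 0)
    (s : Matrix (Fin (2 * n + 1)) (Fin (2 * n + 1)) K)
    (hs1 : sᵀ * M * s = M) (hs2 : s.det = 1)
    (hss : Nat.Coprime (orderOf s) p) (i : ℕ) :
    ∃ h : Matrix (Fin (2 * n + 1)) (Fin (2 * n + 1)) K,
      hᵀ * M * h = M ∧ h.det = 1 ∧
      (Set.range fun k : ℕ => h⁻¹ * s ^ k * h) =
        Set.range fun k : ℕ => (s.map fun x => x ^ p ^ i) ^ k := by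
  have := Fact.mk hp
  refine stmt_1_general hodd ?_ ?_ ?_ ?_ hs1 hss
  · exact ⟨n, Fintype.card_fin _⟩
  · exact Matrix.IsSymm.ext fun a b ↦ by rw [hM, hM, add_comm]
  · exact det_ne_zero_of_left_inverse (antidiagonal_mul_self hM)
  · ext a b
    simp [hM, apply_ite (· ^ p ^ i), hp.ne_zero]
end

section
/- Assume ℓ is an odd prime and γ ≥ 1. Let E be the subgroup of the unit group of the matrix ring Matrix ι ι F generated by the clock matrices X_j and shift matrices Y_j for all j : Fin γ. Then: (1) E has cardinality ℓ^(2γ+1); (2) g^ℓ = 1 for every g ∈ E; (3) the center of E equals the commutator subgroup of E, equals the cyclic subgroup generated by the scalar matrix ζ • 1, and has cardinality ℓ. (Thus E is a faithful matrix realization of the extraspecial group E_γ of order ℓ^(2γ+1) and exponent ℓ used in the construction of basic subgroups.) -/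
open Matrix

/-- The clock matrix `X⁰_j`. -/
def clockMatrix (ℓ γ : ℕ) (F : Type) [Field F] (ζ : F) (j : Fin γ) :
    Matrix (Fin γ → Fin ℓ) (Fin γ → Fin ℓ) F :=
  Matrix.diagonal fun f => ζ ^ (f j : ℕ)

/-- The shift matrix `Y⁰_j`. -/
def shiftMatrix (ℓ γ : ℕ) [NeZero ℓ] (F : Type) [Field F] (j : Fin γ) :
    Matrix (Fin γ → Fin ℓ) (Fin γ → Fin ℓ) F :=
  fun f g => if f = Function.update g j (g j + 1) then 1 else 0

/-- The subgroup of the unit group of the matrix ring generated by the clock and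
shift matrices. -/
def extraspecialSubgroup (ℓ γ : ℕ) [NeZero ℓ] (F : Type) [Field F] (ζ : F) :
    Subgroup (Matrix (Fin γ → Fin ℓ) (Fin γ → Fin ℓ) F)ˣ :=
  Subgroup.closure {u | (∃ j, (u : Matrix (Fin γ → Fin ℓ) (Fin γ → Fin ℓ) F)
      = clockMatrix ℓ γ F ζ j) ∨
    ∃ j, (u : Matrix (Fin γ → Fin ℓ) (Fin γ → Fin ℓ) F) = shiftMatrix ℓ γ F j}

/-! The clock and shift matrices are the images of the standard generators of a Heisenberg group
under its Weyl representation. That representation is faithful when its central character is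
injective, so the order, exponent, center and commutator subgroup can be read off from the
explicit multiplication of the Heisenberg group. -/

section RangeOfInjective

variable {G G' : Type*} [Group G] [Group G']

theorem map_subtype_center_range {φ : G →* G'} (hφ : Function.Injective φ) :
    (Subgroup.center φ.range).map φ.range.subtype = (Subgroup.center G).map φ := by
  ext u
  simp only [Subgroup.mem_map, Subgroup.mem_center_iff, Subtype.exists, Subtype.forall,
    MonoidHom.mem_range, Subgroup.subtype_apply, Subtype.ext_iff, Subgroup.coe_mul,
    forall_exists_index, forall_apply_eq_imp_iff]
  constructor
  · rintro ⟨_, ⟨x, rfl⟩, hx, rfl⟩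
    exact ⟨x, fun y ↦ hφ (by simpa only [map_mul] using hx y), rfl⟩
  · rintro ⟨x, hx, rfl⟩
    exact ⟨φ x, ⟨x, rfl⟩, fun y ↦ by rw [← map_mul, hx, map_mul], rfl⟩

theorem map_subtype_commutator_range (φ : G →* G') :
    (commutator φ.range).map φ.range.subtype = (commutator G).map φ := by
  simp only [commutator_def, Subgroup.map_commutator, ← MonoidHom.range_eq_map,
    Subgroup.range_subtype]

end RangeOfInjective

theorem apply_mem_of_apply_single_one_mem {ι R G : Type*} [Finite ι] [DecidableEq ι] [Ring R]
    [Group G] (hR : Function.Surjective (Int.cast : ℤ → R))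
    {φ : Multiplicative (ι → R) →* G} {K : Subgroup G}
    (hK : ∀ j, φ (.ofAdd (Pi.single j 1)) ∈ K) (a : ι → R) : φ (.ofAdd a) ∈ K := by
  cases nonempty_fintype ι
  induction a using Pi.single_induction with
  | zero => simp
  | add a a' ha ha' => simpa only [ofAdd_add, map_mul] using mul_mem ha ha'
  | single j r =>
    obtain ⟨n, rfl⟩ := hR r
    have single_eq : Pi.single j (n : R) = n • (Pi.single j 1 : ι → R) := by
      rw [← Pi.single_smul', zsmul_one]
    simpa only [single_eq, ofAdd_zsmul, map_zpow] using zpow_mem (hK j) n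

/-- The Heisenberg group over a ring `R` with index type `ι`: triples `(c, a, b)` of a central, a
clock and a shift coordinate, multiplied as the block unitriangular matrices
`[1, a, c; 0, 1, b; 0, 0, 1]` with `a` a row and `b` a column. -/
@[ext]
structure HeisenbergGroup (ι R : Type*) where
  central : R
  clock : ι → R
  shift : ι → R

namespace HeisenbergGroup

open scoped commutatorElement

theorem card_eq (ι R : Type*) [Fintype ι] :
    Nat.card (HeisenbergGroup ι R) = Nat.card R ^ (2 * Fintype.card ι + 1) := by
  let coordinates : HeisenbergGroup ι R ≃ R × (ι → R) × (ι → R) :=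
    { toFun x := (x.central, x.clock, x.shift)
      invFun p := ⟨p.1, p.2.1, p.2.2⟩ }
  rw [Nat.card_congr coordinates, Nat.card_prod, Nat.card_prod, Nat.card_fun,
    Nat.card_eq_fintype_card (α := ι)]
  ring

variable {ι R : Type*} [Ring R]

instance : One (HeisenbergGroup ι R) := ⟨⟨0, 0, 0⟩⟩

@[simp] theorem central_one : (1 : HeisenbergGroup ι R).central = 0 := rfl
@[simp] theorem clock_one : (1 : HeisenbergGroup ι R).clock = 0 := rfl
@[simp] theorem shift_one : (1 : HeisenbergGroup ι R).shift = 0 := rfl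

variable [Fintype ι]

instance : Mul (HeisenbergGroup ι R) where
  mul x y := ⟨x.central + y.central + x.clock ⬝ᵥ y.shift, x.clock + y.clock, x.shift + y.shift⟩

instance : Inv (HeisenbergGroup ι R) where
  inv x := ⟨-x.central + x.clock ⬝ᵥ x.shift, -x.clock, -x.shift⟩

section Projections

variable (x y : HeisenbergGroup ι R)

@[simp] theorem central_mul :
    (x * y).central = x.central + y.central + x.clock ⬝ᵥ y.shift := rfl
@[simp] theorem clock_mul : (x * y).clock = x.clock + y.clock := rfl
@[simp] theorem shift_mul : (x * y).shift = x.shift + y.shift := rfl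

@[simp] theorem central_inv : x⁻¹.central = -x.central + x.clock ⬝ᵥ x.shift := rfl
@[simp] theorem clock_inv : x⁻¹.clock = -x.clock := rfl
@[simp] theorem shift_inv : x⁻¹.shift = -x.shift := rfl

end Projections

instance : Group (HeisenbergGroup ι R) :=
  Group.ofLeftAxioms
    (fun x y z ↦ by
      ext1
      · simp only [central_mul, clock_mul, shift_mul, add_dotProduct, dotProduct_add]
        abel
      · exact add_assoc _ _ _
      · exact add_assoc _ _ _)
    (fun x ↦ by ext1 <;> simp)
    (fun x ↦ by ext1 <;> simp)

/-- The inclusion of the central coordinate. -/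
@[simps apply]
def centralHom : Multiplicative R →* HeisenbergGroup ι R where
  toFun c := ⟨c.toAdd, 0, 0⟩
  map_one' := rfl
  map_mul' c c' := by ext1 <;> simp

/-- The inclusion of the clock coordinates. -/
@[simps apply]
def clockHom : Multiplicative (ι → R) →* HeisenbergGroup ι R where
  toFun a := ⟨0, a.toAdd, 0⟩
  map_one' := rfl
  map_mul' a a' := by ext1 <;> simp

/-- The inclusion of the shift coordinates. -/
@[simps apply]
def shiftHom : Multiplicative (ι → R) →* HeisenbergGroup ι R where
  toFun b := ⟨0, 0, b.toAdd⟩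
  map_one' := rfl
  map_mul' b b' := by ext1 <;> simp

theorem commutatorElement_eq_centralHom (x y : HeisenbergGroup ι R) :
    ⁅x, y⁆ = centralHom (.ofAdd (x.clock ⬝ᵥ y.shift - y.clock ⬝ᵥ x.shift)) := by
  rw [commutatorElement_def, mul_inv_eq_iff_eq_mul, mul_inv_eq_iff_eq_mul]
  ext1
  · simp only [central_mul, clock_mul, centralHom_apply, toAdd_ofAdd, zero_dotProduct,
      zero_add, add_zero]
    abel
  · simp [add_comm]
  · simp [add_comm]

theorem commute_iff {x y : HeisenbergGroup ι R} :
    x * y = y * x ↔ x.clock ⬝ᵥ y.shift = y.clock ⬝ᵥ x.shift := by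
  simp [HeisenbergGroup.ext_iff, add_comm]

theorem center_eq_range_centralHom :
    Subgroup.center (HeisenbergGroup ι R) = centralHom.range := by
  classical
  ext x
  rw [Subgroup.mem_center_iff]
  constructor
  · intro hx
    have clock_eq_zero : x.clock = 0 := funext fun j ↦ by
      simpa using (commute_iff.1 (hx (shiftHom (.ofAdd (Pi.single j 1))))).symm
    have shift_eq_zero : x.shift = 0 := funext fun j ↦ by
      simpa using commute_iff.1 (hx (clockHom (.ofAdd (Pi.single j 1))))
    exact ⟨.ofAdd x.central, HeisenbergGroup.ext rfl clock_eq_zero.symm shift_eq_zero.symm⟩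
  · rintro ⟨c, rfl⟩ y
    simp [commute_iff]

theorem commutatorElement_clockHom_shiftHom_single [DecidableEq ι] (j : ι) (c : R) :
    ⁅(clockHom (.ofAdd (Pi.single j c)) : HeisenbergGroup ι R),
      shiftHom (.ofAdd (Pi.single j 1))⁆ = centralHom (.ofAdd c) := by
  simp [commutatorElement_eq_centralHom]

theorem commutator_eq_range_centralHom [Nonempty ι] :
    commutator (HeisenbergGroup ι R) = centralHom.range := by
  classical
  obtain ⟨j⟩ := ‹Nonempty ι›
  apply le_antisymm
  · refine Subgroup.commutator_le.2 fun x _ y _ ↦ ?_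
    exact ⟨_, (commutatorElement_eq_centralHom x y).symm⟩
  · rintro _ ⟨c, rfl⟩
    rw [← ofAdd_toAdd c, ← commutatorElement_clockHom_shiftHom_single j]
    exact Subgroup.commutator_mem_commutator (Subgroup.mem_top _) (Subgroup.mem_top _)

theorem pow_eq (x : HeisenbergGroup ι R) (n : ℕ) :
    x ^ n = ⟨n • x.central + n.choose 2 • (x.clock ⬝ᵥ x.shift), n • x.clock, n • x.shift⟩ := by
  induction n with
  | zero => ext1 <;> simp
  | succ n ih =>
    rw [pow_succ, ih]
    ext1
    · simp only [central_mul, smul_dotProduct, Nat.choose_succ_succ' n 1, Nat.choose_one_right,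
        add_smul, one_smul]
      abel
    · exact (succ_nsmul _ _).symm
    · exact (succ_nsmul _ _).symm

theorem pow_eq_one_of_odd {n : ℕ} (hn : Odd n) (hnR : (n : R) = 0) (x : HeisenbergGroup ι R) :
    x ^ n = 1 := by
  have nsmul_eq_zero (r : R) : n • r = 0 := by rw [nsmul_eq_mul, hnR, zero_mul]
  have choose_two : n.choose 2 = (n - 1) / 2 * n := by
    rw [Nat.choose_two_right, mul_comm,
      Nat.div_mul_right_comm (even_iff_two_dvd.1 (Nat.Odd.sub_odd hn odd_one))]
  rw [pow_eq, choose_two]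
  ext <;> simp only [mul_smul, nsmul_eq_zero, smul_zero, add_zero, Pi.smul_apply, central_one,
    clock_one, shift_one, Pi.zero_apply]

theorem card_center : Nat.card (Subgroup.center (HeisenbergGroup ι R)) = Nat.card R := by
  have centralHom_injective : Function.Injective (centralHom : _ →* HeisenbergGroup ι R) :=
    fun _ _ h ↦ congrArg central h
  rw [center_eq_range_centralHom]
  exact Nat.card_range_of_injective centralHom_injective

theorem center_eq_zpowers (hR : Function.Surjective (Int.cast : ℤ → R)) :
    Subgroup.center (HeisenbergGroup ι R) = Subgroup.zpowers (centralHom (.ofAdd 1)) := by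
  have zpowers_eq_top : Subgroup.zpowers (Multiplicative.ofAdd (1 : R)) = ⊤ :=
    (Subgroup.eq_top_iff' _).2 fun c ↦ by
      obtain ⟨n, hn⟩ := hR c.toAdd
      exact ⟨n, by simp [← ofAdd_zsmul, hn]⟩
  rw [center_eq_range_centralHom, MonoidHom.range_eq_map, ← zpowers_eq_top, MonoidHom.map_zpowers]

theorem eq_top_of_single_one_mem [DecidableEq ι] [Nonempty ι]
    (hR : Function.Surjective (Int.cast : ℤ → R)) {K : Subgroup (HeisenbergGroup ι R)}
    (hclock : ∀ j, clockHom (.ofAdd (Pi.single j 1)) ∈ K)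
    (hshift : ∀ j, shiftHom (.ofAdd (Pi.single j 1)) ∈ K) : K = ⊤ := by
  have clockHom_mem := apply_mem_of_apply_single_one_mem hR hclock
  have shiftHom_mem := apply_mem_of_apply_single_one_mem hR hshift
  have centralHom_mem (c : R) : centralHom (.ofAdd c) ∈ K := by
    obtain ⟨j⟩ := ‹Nonempty ι›
    rw [← commutatorElement_clockHom_shiftHom_single j, commutatorElement_def]
    exact mul_mem (mul_mem (mul_mem (clockHom_mem _) (shiftHom_mem _))
      (inv_mem (clockHom_mem _))) (inv_mem (shiftHom_mem _))
  refine (Subgroup.eq_top_iff' _).2 fun x ↦ ?_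
  have factorization : x = centralHom (.ofAdd x.central) * shiftHom (.ofAdd x.shift) *
      clockHom (.ofAdd x.clock) := by
    ext1 <;> simp
  rw [factorization]
  exact mul_mem (mul_mem (centralHom_mem _) (shiftHom_mem _)) (clockHom_mem _)

section WeylRepresentation

variable [Fintype R] [DecidableEq R] [DecidableEq ι] {K : Type*} [Semiring K]

/-- The Weyl representation of the Heisenberg group with central character `χ`, on the space of
functions on `ι → R`: the element `(c, a, b)` acts as multiplication by `g ↦ χ (c + a ⬝ᵥ g)`
followed by translation by `b`. -/
@[simps apply]
def weylRep (χ : AddChar R K) : HeisenbergGroup ι R →* Matrix (ι → R) (ι → R) K where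
  toFun x := of fun f g ↦ if f = g + x.shift then χ (x.central + x.clock ⬝ᵥ g) else 0
  map_one' := by ext f g; simp [one_apply]
  map_mul' x y := by
    ext f g
    rw [mul_apply, Finset.sum_eq_single (g + y.shift)]
    · have shift_iff : f = g + (x * y).shift ↔ f = g + y.shift + x.shift := by
        rw [shift_mul, add_assoc, add_comm x.shift]
      have phase : (x * y).central + (x * y).clock ⬝ᵥ g =
          x.central + x.clock ⬝ᵥ (g + y.shift) + (y.central + y.clock ⬝ᵥ g) := by
        rw [central_mul, clock_mul, add_dotProduct, dotProduct_add]
        abel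
      simp only [shift_iff, phase, AddChar.map_add_eq_mul _ (_ + _) (_ + _), of_apply,
        if_true, ite_mul, zero_mul]
    · intro k _ hk
      rw [of_apply _ k g, if_neg hk, mul_zero]
    · simp

theorem weylRep_injective [Nontrivial K] {χ : AddChar R K} (hχ : Function.Injective χ) :
    Function.Injective (weylRep χ : HeisenbergGroup ι R →* _) := by
  intro x y hxy
  have entry_eq (f g : ι → R) : weylRep χ x f g = weylRep χ y f g := by rw [hxy]
  have shift_eq : x.shift = y.shift := by
    by_contra hne
    have := entry_eq x.shift 0
    simp [hne, (χ.val_isUnit _).ne_zero] at this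
  have phase_eq (g : ι → R) : x.central + x.clock ⬝ᵥ g = y.central + y.clock ⬝ᵥ g :=
    hχ (by simpa [shift_eq] using entry_eq (g + y.shift) g)
  have central_eq : x.central = y.central := by simpa using phase_eq 0
  have clock_eq : x.clock = y.clock := funext fun j ↦ by
    simpa [central_eq] using phase_eq (Pi.single j 1)
  exact HeisenbergGroup.ext central_eq clock_eq shift_eq

end WeylRepresentation

end HeisenbergGroup

section ClockShift

open HeisenbergGroup
open scoped Fin.CommRing

variable {ℓ γ : ℕ} [NeZero ℓ]

theorem intCast_fin_surjective : Function.Surjective (Int.cast : ℤ → Fin ℓ) := fun x ↦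
  ⟨(x : ℕ), by rw [Int.cast_natCast, Fin.cast_val_eq_self]⟩

/-- The additive character `x ↦ ζ ^ x` of `Fin ℓ`, the analogue of `AddChar.zmodChar`. -/
@[simps]
def finChar {M : Type*} [Monoid M] {ζ : M} (hζ : ζ ^ ℓ = 1) : AddChar (Fin ℓ) M where
  toFun x := ζ ^ (x : ℕ)
  map_zero_eq_one' := by simp
  map_add_eq_mul' x y := by rw [Fin.val_add, ← pow_eq_pow_mod _ hζ, pow_add]

theorem finChar_injective {M : Type*} [CommMonoid M] {ζ : M} (hζ : IsPrimitiveRoot ζ ℓ) :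
    Function.Injective (finChar hζ.pow_eq_one) :=
  fun x y h ↦ Fin.ext (hζ.pow_inj x.isLt y.isLt h)

variable {F : Type} [Field F] {ζ : F}

/-- The Weyl representation over `Fin ℓ` with central character `x ↦ ζ ^ x`, valued in units. -/
def clockShiftRep (hζ : ζ ^ ℓ = 1) :
    HeisenbergGroup (Fin γ) (Fin ℓ) →* (Matrix (Fin γ → Fin ℓ) (Fin γ → Fin ℓ) F)ˣ :=
  (weylRep (finChar hζ)).toHomUnits

theorem clockShiftRep_injective (hζ : IsPrimitiveRoot ζ ℓ) :
    Function.Injective (clockShiftRep (γ := γ) hζ.pow_eq_one) :=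
  .of_comp (f := Units.val) (weylRep_injective (finChar_injective hζ))

variable (hζ : ζ ^ ℓ = 1)

theorem clockShiftRep_clockHom_single (j : Fin γ) :
    (clockShiftRep hζ (clockHom (.ofAdd (Pi.single j 1)))).val = clockMatrix ℓ γ F ζ j := by
  ext f g
  rw [clockMatrix, diagonal_apply]
  by_cases h : f = g <;> simp [clockShiftRep, h]

theorem clockShiftRep_shiftHom_single (j : Fin γ) :
    (clockShiftRep hζ (shiftHom (.ofAdd (Pi.single j 1)))).val = shiftMatrix ℓ γ F j := by
  ext f g
  have update_eq : Function.update g j (g j + 1) = g + Pi.single j 1 := by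
    ext1 i
    rcases eq_or_ne i j with rfl | hi <;> simp [*]
  simp [clockShiftRep, shiftMatrix, update_eq]

theorem clockShiftRep_centralHom_one :
    (clockShiftRep (γ := γ) hζ (centralHom (.ofAdd 1))).val = ζ • 1 := by
  ext f g
  simp [clockShiftRep, one_apply, ← pow_eq_pow_mod 1 hζ]

theorem extraspecialSubgroup_eq_range [Nonempty (Fin γ)] :
    extraspecialSubgroup ℓ γ F ζ = (clockShiftRep hζ).range := by
  apply le_antisymm
  · refine (Subgroup.closure_le _).2 ?_
    rintro u (⟨j, hu⟩ | ⟨j, hu⟩)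
    · exact ⟨_, Units.ext ((clockShiftRep_clockHom_single hζ j).trans hu.symm)⟩
    · exact ⟨_, Units.ext ((clockShiftRep_shiftHom_single hζ j).trans hu.symm)⟩
  · rw [MonoidHom.range_eq_map, Subgroup.map_le_iff_le_comap, top_le_iff]
    exact eq_top_of_single_one_mem intCast_fin_surjective
      (fun j ↦ Subgroup.subset_closure (.inl ⟨j, clockShiftRep_clockHom_single hζ j⟩))
      (fun j ↦ Subgroup.subset_closure (.inr ⟨j, clockShiftRep_shiftHom_single hζ j⟩))

theorem map_center_clockShiftRep :
    (Subgroup.center _).map (clockShiftRep hζ) =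
      Subgroup.closure {u : (Matrix (Fin γ → Fin ℓ) (Fin γ → Fin ℓ) F)ˣ |
        (u : Matrix (Fin γ → Fin ℓ) (Fin γ → Fin ℓ) F) = ζ • 1} := by
  have scalar_set_eq : {u : (Matrix (Fin γ → Fin ℓ) (Fin γ → Fin ℓ) F)ˣ |
      (u : Matrix (Fin γ → Fin ℓ) (Fin γ → Fin ℓ) F) = ζ • 1} =
      {clockShiftRep hζ (centralHom (.ofAdd 1))} := by
    ext u
    rw [Set.mem_ofPred_eq, Set.mem_singleton_iff, Units.ext_iff, clockShiftRep_centralHom_one]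
  rw [scalar_set_eq, center_eq_zpowers intCast_fin_surjective, MonoidHom.map_zpowers,
    Subgroup.zpowers_eq_closure]

end ClockShift

open scoped Fin.CommRing in
theorem stmt_5_general (ℓ : ℕ) (hodd : Odd ℓ) [NeZero ℓ]
    (F : Type) [Field F] (ζ : F) (hζ : IsPrimitiveRoot ζ ℓ)
    (γ : ℕ) (hγ : 1 ≤ γ) :
    Nat.card (extraspecialSubgroup ℓ γ F ζ) = ℓ ^ (2 * γ + 1) ∧
    (∀ g ∈ extraspecialSubgroup ℓ γ F ζ, g ^ ℓ = 1) ∧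
    (Subgroup.center ↥(extraspecialSubgroup ℓ γ F ζ)).map
        (extraspecialSubgroup ℓ γ F ζ).subtype
      = (commutator ↥(extraspecialSubgroup ℓ γ F ζ)).map
        (extraspecialSubgroup ℓ γ F ζ).subtype ∧
    (Subgroup.center ↥(extraspecialSubgroup ℓ γ F ζ)).map
        (extraspecialSubgroup ℓ γ F ζ).subtype
      = Subgroup.closure {u : (Matrix (Fin γ → Fin ℓ) (Fin γ → Fin ℓ) F)ˣ |
          (u : Matrix (Fin γ → Fin ℓ) (Fin γ → Fin ℓ) F)
            = ζ • (1 : Matrix (Fin γ → Fin ℓ) (Fin γ → Fin ℓ) F)} ∧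
    Nat.card (Subgroup.center ↥(extraspecialSubgroup ℓ γ F ζ)) = ℓ := by
  have : Nonempty (Fin γ) := ⟨⟨0, hγ⟩⟩
  have hφ := clockShiftRep_injective (γ := γ) hζ
  let e := MonoidHom.ofInjective hφ
  rw [extraspecialSubgroup_eq_range hζ.pow_eq_one, map_subtype_center_range hφ,
    map_subtype_commutator_range, HeisenbergGroup.commutator_eq_range_centralHom,
    ← HeisenbergGroup.center_eq_range_centralHom]
  refine ⟨?_, ?_, rfl, map_center_clockShiftRep hζ.pow_eq_one, ?_⟩
  · rw [← Nat.card_congr e.toEquiv, HeisenbergGroup.card_eq, Nat.card_fin, Fintype.card_fin]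
  · rintro _ ⟨x, rfl⟩
    rw [← map_pow, HeisenbergGroup.pow_eq_one_of_odd hodd (by simp), map_one]
  · rw [← Nat.card_congr (Subgroup.centerCongr e).toEquiv, HeisenbergGroup.card_center,
      Nat.card_fin]

/-- For `ℓ` an odd prime, `γ ≥ 1` and `ζ` of order `ℓ`, the subgroup
`E` generated by the clock and shift matrices has order `ℓ^(2γ+1)`, exponent `ℓ`, and
its center equals its commutator subgroup, equals the cyclic subgroup generated by the
scalar matrix `ζ • 1`, and has order `ℓ` — i.e. `E` is extraspecial of order
`ℓ^(2γ+1)` and exponent `ℓ`. -/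
theorem stmt_5 (ℓ : ℕ) (hℓ : ℓ.Prime) (hodd : Odd ℓ) [NeZero ℓ]
    (F : Type) [Field F] (ζ : F) (hζ1 : ζ ^ ℓ = 1) (hζ : ζ ≠ 1)
    (γ : ℕ) (hγ : 1 ≤ γ) :
    Nat.card (extraspecialSubgroup ℓ γ F ζ) = ℓ ^ (2 * γ + 1) ∧
    (∀ g ∈ extraspecialSubgroup ℓ γ F ζ, g ^ ℓ = 1) ∧
    (Subgroup.center ↥(extraspecialSubgroup ℓ γ F ζ)).map
        (extraspecialSubgroup ℓ γ F ζ).subtype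
      = (commutator ↥(extraspecialSubgroup ℓ γ F ζ)).map
        (extraspecialSubgroup ℓ γ F ζ).subtype ∧
    (Subgroup.center ↥(extraspecialSubgroup ℓ γ F ζ)).map
        (extraspecialSubgroup ℓ γ F ζ).subtype
      = Subgroup.closure {u : (Matrix (Fin γ → Fin ℓ) (Fin γ → Fin ℓ) F)ˣ | (u : Matrix (Fin γ → Fin ℓ) (Fin γ → Fin ℓ) F)
          = ζ • (1 : Matrix (Fin γ → Fin ℓ) (Fin γ → Fin ℓ) F)} ∧
    Nat.card (Subgroup.center ↥(extraspecialSubgroup ℓ γ F ζ)) = ℓ := by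
  have := Fact.mk hℓ
  exact stmt_5_general ℓ hodd F ζ (orderOf_eq_prime hζ1 hζ ▸ IsPrimitiveRoot.orderOf ζ) γ hγ
end

section
/- Let m be a natural number and let A be a matrix over F indexed by (Fin m × ι). Then A commutes with 1 ⊗ₖ X_j and with 1 ⊗ₖ Y_j for every j : Fin γ if and only if there exists a matrix B : Matrix (Fin m) (Fin m) F with A = B ⊗ₖ 1 (where 1 denotes the identity matrix of the appropriate size). In particular, the centralizer of the basic subgroup generated by the I_m ⊗ X_j and I_m ⊗ Y_j in GL(m·ℓ^γ, F) consists exactly of the matrices B ⊗ I_{ℓ^γ} with B ∈ GL(m, F), which is the key content of Lemma 6.5(1): C⁰_{m,α,γ} = C⁰_{m,α} ⊗ I_γ. -/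
open Matrix Kronecker

/-!
A matrix commutes with `1 ⊗ₖ M` exactly when each of its `ι × ι` blocks commutes with `M`, and it
has the form `B ⊗ₖ 1` exactly when each of its blocks is scalar; so it suffices to show that the
clock and shift matrices together commute only with scalar matrices. The clock matrices have
distinct joint eigenvalues on the standard basis vectors, so a matrix commuting with all of them is
diagonal. The shift matrices permute the standard basis vectors transitively, so a diagonal matrix
commuting with all of them is constant along the diagonal.
-/

section Periodic

variable {M α : Type*}

theorem periodic_of_mem_closure [AddMonoid M] {D : M → α} {s : Set M}
    (hD : ∀ c ∈ s, Function.Periodic D c) {x : M} (hx : x ∈ AddSubmonoid.closure s) :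
    Function.Periodic D x := by
  induction hx using AddSubmonoid.closure_induction with
  | mem c hc => exact hD c hc
  | zero => exact Function.periodic_with_period_zero D
  | add c d _ _ hc hd => exact hc.add_period hd

theorem closure_range_single_eq_top {κ : Type*} [Finite κ] [DecidableEq κ] [AddCommMonoid M]
    {c : M} (hc : AddSubmonoid.closure {c} = ⊤) :
    AddSubmonoid.closure (Set.range fun j : κ ↦ Pi.single j c) = ⊤ := by
  cases nonempty_fintype κ
  refine (AddSubmonoid.eq_top_iff' _).mpr fun f ↦ ?_
  rw [← Finset.univ_sum_single f]
  refine sum_mem fun j _ ↦ ?_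
  obtain ⟨k, hk⟩ : ∃ k : ℕ, k • c = f j :=
    AddSubmonoid.mem_closure_singleton.mp (hc ▸ AddSubmonoid.mem_top (f j))
  rw [← hk, Pi.single_smul]
  exact nsmul_mem (AddSubmonoid.subset_closure (Set.mem_range_self j)) k

theorem closure_singleton_one_eq_top (ℓ : ℕ) [NeZero ℓ] :
    AddSubmonoid.closure {(1 : Fin ℓ)} = ⊤ := by
  refine (AddSubmonoid.eq_top_iff' _).mpr fun x ↦ ?_
  refine AddSubmonoid.mem_closure_singleton.mpr ⟨(x : ℕ), ?_⟩
  open Fin.CommRing in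
  rw [nsmul_one, Fin.cast_val_eq_self]

end Periodic

section Commute

variable {ι R n : Type*} [Fintype ι]

theorem commute_one_kronecker_iff [NonAssocSemiring R] [Fintype n] [DecidableEq n]
    {A : Matrix (n × ι) (n × ι) R} {M : Matrix ι ι R} :
    Commute A ((1 : Matrix n n R) ⊗ₖ M) ↔ ∀ a b, Commute ((comp n n ι ι R).symm A a b) M := by
  simp only [commute_iff_eq, ← Matrix.ext_iff, Prod.forall, mul_apply, Fintype.sum_prod_type,
    kroneckerMap_apply, one_apply, comp_symm_apply, ite_mul, mul_ite, one_mul, zero_mul, mul_zero,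
    Finset.sum_ite_irrel, Finset.sum_const_zero, Finset.sum_ite_eq, Finset.sum_ite_eq',
    Finset.mem_univ, if_true]
  exact forall_congr' fun a ↦ forall_comm

variable [DecidableEq ι]

theorem exists_eq_kronecker_one_iff [Semiring R] {A : Matrix (n × ι) (n × ι) R} :
    (∃ B : Matrix n n R, A = B ⊗ₖ (1 : Matrix ι ι R)) ↔
      ∀ a b, (comp n n ι ι R).symm A a b ∈ Set.range (scalar ι) := by
  constructor
  · rintro ⟨B, rfl⟩ a b
    refine ⟨B a b, ?_⟩
    ext f g
    simp [diagonal_apply, one_apply]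
  · intro h
    choose B hB using h
    refine ⟨of B, ?_⟩
    ext ⟨a, f⟩ ⟨b, g⟩
    simpa [diagonal_apply, one_apply] using (congr_fun₂ (hB a b) f g).symm

theorem isDiag_of_commute_diagonal [CommRing R] [NoZeroDivisors R] {κ : Type*} {M : Matrix ι ι R}
    {d : κ → ι → R} (hd : Function.Injective fun i k ↦ d k i)
    (hM : ∀ k, Commute M (diagonal (d k))) : M.IsDiag := by
  intro i j hij
  obtain ⟨k, hk⟩ : ∃ k, d k i ≠ d k j := Function.ne_iff.mp (hd.ne hij)
  have hentry : M i j * d k j = d k i * M i j := by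
    simpa only [mul_diagonal, diagonal_mul] using congr_fun₂ (hM k).eq i j
  have hprod : (d k i - d k j) * M i j = 0 := by linear_combination -hentry
  exact (mul_eq_zero.mp hprod).resolve_left (sub_ne_zero.mpr hk)

theorem commute_permMatrix_iff [NonAssocSemiring R] {M : Matrix ι ι R} {σ : Equiv.Perm ι} :
    Commute M (σ.permMatrix R) ↔ M.submatrix σ σ = M := by
  rw [commute_iff_eq, PEquiv.mul_toMatrix_toPEquiv, PEquiv.toMatrix_toPEquiv_mul]
  constructor
  · intro h
    ext i j
    simpa using (congr_fun₂ h i (σ j)).symm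
  · intro h
    ext i j
    simpa using (congr_fun₂ h i (σ.symm j)).symm

theorem periodic_diag_of_commute_permMatrix_addRight_symm [NonAssocSemiring R] [AddGroup ι]
    {M : Matrix ι ι R} {c : ι} (hM : Commute M (Equiv.Perm.permMatrix R (Equiv.addRight c).symm)) :
    Function.Periodic M.diag c := by
  intro x
  rw [commute_permMatrix_iff] at hM
  simpa using (congr_fun₂ hM (x + c) (x + c)).symm

end Commute

section ClockShift

variable {ℓ γ : ℕ} {F : Type} [Field F]

theorem isDiag_of_commute_clockMatrix {ζ : F} (hζ : IsPrimitiveRoot ζ ℓ)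
    {M : Matrix (Fin γ → Fin ℓ) (Fin γ → Fin ℓ) F}
    (hM : ∀ j, Commute M (clockMatrix ℓ γ F ζ j)) : M.IsDiag := by
  refine isDiag_of_commute_diagonal (fun f g hfg ↦ ?_) hM
  ext j
  exact hζ.pow_inj (f j).is_lt (g j).is_lt (congr_fun hfg j)

variable [NeZero ℓ]

theorem shiftMatrix_eq_permMatrix_addRight_symm (j : Fin γ) :
    shiftMatrix ℓ γ F j = Equiv.Perm.permMatrix F (Equiv.addRight (Pi.single j 1)).symm := by
  ext f g
  have hupdate : Function.update g j (g j + 1) = g + Pi.single j 1 := by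
    ext i
    by_cases hi : i = j
    · subst hi; simp
    · simp [hi]
  rw [shiftMatrix, hupdate, Equiv.Perm.permMatrix, PEquiv.toMatrix_apply, Equiv.toPEquiv_apply]
  simp only [Option.mem_some_iff, eq_comm, Equiv.eq_symm_apply, Equiv.coe_addRight]

theorem periodic_diag_of_commute_shiftMatrix {M : Matrix (Fin γ → Fin ℓ) (Fin γ → Fin ℓ) F}
    {j : Fin γ} (hM : Commute M (shiftMatrix ℓ γ F j)) :
    Function.Periodic M.diag (Pi.single j 1) := by
  rw [shiftMatrix_eq_permMatrix_addRight_symm] at hM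
  exact periodic_diag_of_commute_permMatrix_addRight_symm hM

theorem commute_clockMatrix_and_shiftMatrix_iff {ζ : F} (hζ : IsPrimitiveRoot ζ ℓ)
    {M : Matrix (Fin γ → Fin ℓ) (Fin γ → Fin ℓ) F} :
    (∀ j, Commute M (clockMatrix ℓ γ F ζ j) ∧ Commute M (shiftMatrix ℓ γ F j)) ↔
      M ∈ Set.range (scalar (Fin γ → Fin ℓ)) := by
  constructor
  · intro hM
    have hdiag : M.IsDiag := isDiag_of_commute_clockMatrix hζ fun j ↦ (hM j).1
    have hperiod : ∀ c ∈ Set.range fun j : Fin γ ↦ Pi.single j (1 : Fin ℓ),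
        Function.Periodic M.diag c :=
      Set.forall_mem_range.mpr fun j ↦ periodic_diag_of_commute_shiftMatrix (hM j).2
    have hconst (f : Fin γ → Fin ℓ) : M.diag f = M.diag 0 := by
      refine (periodic_of_mem_closure hperiod ?_).eq
      rw [closure_range_single_eq_top (closure_singleton_one_eq_top ℓ)]
      exact AddSubmonoid.mem_top f
    refine ⟨M.diag 0, ?_⟩
    calc
      scalar (Fin γ → Fin ℓ) (M.diag 0) = diagonal M.diag :=
        congrArg diagonal (funext fun f ↦ (hconst f).symm)
      _ = M := hdiag.diagonal_diag
  · rintro ⟨c, rfl⟩ j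
    exact ⟨scalar_commute c (Commute.all c) _, scalar_commute c (Commute.all c) _⟩

theorem stmt_6_general {ζ : F} (hζ : IsPrimitiveRoot ζ ℓ) {n : Type*} [Fintype n] [DecidableEq n]
    (A : Matrix (n × (Fin γ → Fin ℓ)) (n × (Fin γ → Fin ℓ)) F) :
    (∀ j : Fin γ,
        Commute A ((1 : Matrix n n F) ⊗ₖ clockMatrix ℓ γ F ζ j) ∧
        Commute A ((1 : Matrix n n F) ⊗ₖ shiftMatrix ℓ γ F j)) ↔
    ∃ B : Matrix n n F, A = B ⊗ₖ (1 : Matrix (Fin γ → Fin ℓ) (Fin γ → Fin ℓ) F) := by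
  simp only [commute_one_kronecker_iff, exists_eq_kronecker_one_iff,
    ← commute_clockMatrix_and_shiftMatrix_iff hζ]
  grind

end ClockShift

/-- A matrix `A` indexed by `Fin m × (Fin γ → Fin ℓ)` commutes with
all the matrices `1 ⊗ₖ X_j` and `1 ⊗ₖ Y_j` if and only if `A = B ⊗ₖ 1` for some
`B : Matrix (Fin m) (Fin m) F`.  This is the key content of Lemma 6.5(1):
`C⁰_{m,α,γ} = C⁰_{m,α} ⊗ I_γ`. -/
theorem stmt_6 (ℓ : ℕ) (hℓ : ℓ.Prime) [NeZero ℓ] (F : Type) [Field F]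
    (ζ : F) (hζ1 : ζ ^ ℓ = 1) (hζ : ζ ≠ 1) (γ m : ℕ)
    (A : Matrix (Fin m × (Fin γ → Fin ℓ)) (Fin m × (Fin γ → Fin ℓ)) F) :
    (∀ j : Fin γ,
        A * ((1 : Matrix (Fin m) (Fin m) F) ⊗ₖ clockMatrix ℓ γ F ζ j)
          = ((1 : Matrix (Fin m) (Fin m) F) ⊗ₖ clockMatrix ℓ γ F ζ j) * A ∧
        A * ((1 : Matrix (Fin m) (Fin m) F) ⊗ₖ shiftMatrix ℓ γ F j)
          = ((1 : Matrix (Fin m) (Fin m) F) ⊗ₖ shiftMatrix ℓ γ F j) * A) ↔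
    ∃ B : Matrix (Fin m) (Fin m) F,
      A = B ⊗ₖ (1 : Matrix (Fin γ → Fin ℓ) (Fin γ → Fin ℓ) F) := by
  have : Fact ℓ.Prime := ⟨hℓ⟩
  exact stmt_6_general (IsPrimitiveRoot.iff_orderOf.mpr (orderOf_eq_prime hζ1 hζ)) A
end

section
/- The F-subalgebra of the matrix algebra Matrix ι ι F generated by the clock matrices X_j and the shift matrices Y_j, for all j : Fin γ, is the whole matrix algebra: Algebra.adjoin F ({X_j : j} ∪ {Y_j : j}) = ⊤. (That is, the basic subgroup generated by clock and shift matrices acts irreducibly on F^(ℓ^γ); this underlies the computation of its centralizer in Lemma 6.5.) -/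
open Matrix

/-!
Distinct indices `f ≠ g` differ in some coordinate `j`, so the clock matrix `X_j` has different
diagonal entries at `f` and `g`; by interpolation, polynomials in the clock matrices exhaust all
diagonal matrices.
Cutting a matrix `M` of the algebra by diagonal matrix units on both sides isolates its entries, so
every nonzero entry `M i j` puts the matrix unit `E i j` into the algebra. For shift matrices these
are the units `E (g + e_j) g`, with addition modulo `ℓ`. Any two indices are joined by a chain of
moves `g ↦ g + e_j`, and multiplying along the chain produces every matrix unit.
-/

section SeparatesPoints

variable {ι K : Type*} [Finite ι] [Field K] {S : Subalgebra K (ι → K)}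

theorem pi_single_one_mem_of_separatesPoints [DecidableEq ι]
    (hS : (S : Set (ι → K)).SeparatesPoints) (x : ι) : Pi.single x 1 ∈ S := by
  cases nonempty_fintype ι
  choose! φ hφS hφ using fun y (hy : x ≠ y) ↦ hS hy
  let p : ι → ι → K := fun y ↦ (φ y x - φ y y)⁻¹ • (φ y - algebraMap K (ι → K) (φ y y))
  have hpS : ∏ y ∈ Finset.univ.erase x, p y ∈ S := prod_mem fun y hy ↦
    S.smul_mem (S.sub_mem (hφS y (Finset.ne_of_mem_erase hy).symm) (S.algebraMap_mem _)) _
  have hp_one : ∀ y, x ≠ y → p y x = 1 := fun y hy ↦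
    inv_mul_cancel₀ (sub_ne_zero.mpr (hφ y hy))
  have hp_zero : ∀ y, p y y = 0 := fun y ↦ by simp [p]
  convert hpS
  ext z
  rw [Finset.prod_apply]
  obtain rfl | hz := eq_or_ne z x
  · rw [Pi.single_eq_same, Finset.prod_eq_one fun y hy ↦ hp_one y (Finset.ne_of_mem_erase hy).symm]
  · rw [Pi.single_eq_of_ne hz]
    exact (Finset.prod_eq_zero (f := fun y ↦ p y z)
      (Finset.mem_erase.mpr ⟨hz, Finset.mem_univ z⟩) (hp_zero z)).symm

theorem subalgebra_pi_eq_top_of_separatesPoints (hS : (S : Set (ι → K)).SeparatesPoints) :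
    S = ⊤ := by
  classical
  cases nonempty_fintype ι
  refine eq_top_iff.mpr fun φ _ ↦ ?_
  rw [pi_eq_sum_univ' φ]
  exact sum_mem fun x _ ↦ S.smul_mem (pi_single_one_mem_of_separatesPoints hS x) _

end SeparatesPoints

section MatrixUnits

variable {n : Type*} [Fintype n] [DecidableEq n]

theorem single_apply_mem_of_diagonal_mem {R : Type*} [CommSemiring R]
    {A : Subalgebra R (Matrix n n R)} (hA : ∀ d, diagonal d ∈ A) {M : Matrix n n R} (hM : M ∈ A)
    (i j : n) : single i j (M i j) ∈ A := by
  have hunit (k : n) : single k k (1 : R) ∈ A := diagonal_single k (1 : R) ▸ hA _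
  simpa using A.mul_mem (A.mul_mem (hunit i) hM) (hunit j)

variable {K : Type*} [Semifield K] {A : Subalgebra K (Matrix n n K)}

theorem single_mem_of_reflTransGen (hA : ∀ d, diagonal d ∈ A) {i j : n}
    (hij : Relation.ReflTransGen (fun l k ↦ ∃ M ∈ A, M k l ≠ 0) j i) (c : K) :
    single i j c ∈ A := by
  induction hij generalizing c with
  | refl => exact diagonal_single j c ▸ hA _
  | @tail l k _ hlk ih =>
    obtain ⟨M, hM, hne⟩ := hlk
    have hmul := A.mul_mem (single_apply_mem_of_diagonal_mem hA hM k l) (ih ((M k l)⁻¹ * c))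
    rwa [single_mul_single_same, mul_inv_cancel_left₀ hne] at hmul

theorem matrix_subalgebra_eq_top_of_reflTransGen (hA : ∀ d, diagonal d ∈ A)
    (hconn : ∀ i j, Relation.ReflTransGen (fun l k ↦ ∃ M ∈ A, M k l ≠ 0) j i) : A = ⊤ := by
  refine eq_top_iff.mpr fun M _ ↦ ?_
  rw [matrix_eq_sum_single M]
  exact sum_mem fun i _ ↦ sum_mem fun j _ ↦ single_mem_of_reflTransGen hA (hconn i j) _

end MatrixUnits

section Reachability

open Relation

theorem reflTransGen_add_nsmul {M : Type*} [AddMonoid M] (a b : M) (n : ℕ) :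
    ReflTransGen (fun x y ↦ y = x + a) b (b + n • a) := by
  induction n with
  | zero => simpa using ReflTransGen.refl
  | succ n ih => exact ih.tail (by rw [succ_nsmul, add_assoc])

open scoped Fin.CommRing in
theorem reflTransGen_fin_add_one {ℓ : ℕ} [NeZero ℓ] (a b : Fin ℓ) :
    ReflTransGen (fun x y ↦ y = x + 1) a b := by
  simpa [nsmul_one] using reflTransGen_add_nsmul 1 a (b - a).val

theorem reflTransGen_update {J : Type*} [Finite J] [DecidableEq J] {α : J → Type*}
    {r : ∀ j, α j → α j → Prop} {f g : ∀ j, α j} (h : ∀ j, ReflTransGen (r j) (f j) (g j)) :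
    ReflTransGen (fun u v ↦ ∃ j b, r j (u j) b ∧ v = Function.update u j b) f g := by
  cases nonempty_fintype J
  suffices ∀ s : Finset J, ReflTransGen _ f (s.piecewise g f) by simpa using this Finset.univ
  intro s
  induction s using Finset.induction_on with
  | empty => simpa using ReflTransGen.refl
  | insert j s hj ih =>
    refine ih.trans ?_
    have hj_eq : Function.update (s.piecewise g f) j (f j) = s.piecewise g f := by simp [hj]
    rw [Finset.piecewise_insert, ← hj_eq, Function.update_idem]
    exact (h j).lift (Function.update (s.piecewise g f) j) fun a b hab ↦
      ⟨j, b, by simpa using hab, by simp⟩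

end Reachability

section ClockShift

variable {ℓ γ : ℕ} {F : Type} [Field F]

theorem diagonal_mem_of_clockMatrix_mem {ζ : F} (hζ : IsPrimitiveRoot ζ ℓ)
    {A : Subalgebra F (Matrix (Fin γ → Fin ℓ) (Fin γ → Fin ℓ) F)}
    (hA : ∀ j, clockMatrix ℓ γ F ζ j ∈ A) (d : (Fin γ → Fin ℓ) → F) : diagonal d ∈ A := by
  have hsep : (A.comap (diagonalAlgHom F) : Set ((Fin γ → Fin ℓ) → F)).SeparatesPoints := by
    intro f g hfg
    obtain ⟨j, hj⟩ := Function.ne_iff.mp hfg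
    exact ⟨fun f ↦ ζ ^ (f j : ℕ), hA j,
      fun h ↦ hj (Fin.ext (hζ.pow_inj (f j).isLt (g j).isLt h))⟩
  have hd : d ∈ A.comap (diagonalAlgHom F) :=
    subalgebra_pi_eq_top_of_separatesPoints hsep ▸ Algebra.mem_top
  exact hd

variable [NeZero ℓ]

theorem shiftMatrix_update_apply (j : Fin γ) (g : Fin γ → Fin ℓ) :
    shiftMatrix ℓ γ F j (Function.update g j (g j + 1)) g = 1 :=
  if_pos rfl

theorem stmt_7_general {ζ : F} (hζ : IsPrimitiveRoot ζ ℓ) :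
    Algebra.adjoin F
      ({M : Matrix (Fin γ → Fin ℓ) (Fin γ → Fin ℓ) F | ∃ j, M = clockMatrix ℓ γ F ζ j} ∪
       {M : Matrix (Fin γ → Fin ℓ) (Fin γ → Fin ℓ) F | ∃ j, M = shiftMatrix ℓ γ F j}) = ⊤ := by
  apply matrix_subalgebra_eq_top_of_reflTransGen
  · exact diagonal_mem_of_clockMatrix_mem hζ fun j ↦ Algebra.subset_adjoin (.inl ⟨j, rfl⟩)
  · intro f g
    refine Relation.ReflTransGen.mono ?_ _ _
      (reflTransGen_update fun j ↦ reflTransGen_fin_add_one (g j) (f j))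
    rintro u _ ⟨j, _, rfl, rfl⟩
    refine ⟨shiftMatrix ℓ γ F j, Algebra.subset_adjoin (.inr ⟨j, rfl⟩), ?_⟩
    rw [shiftMatrix_update_apply]
    exact one_ne_zero

end ClockShift

/-- The `F`-subalgebra of the matrix algebra generated by the clock
and shift matrices is the whole matrix algebra; i.e. the basic subgroup acts
irreducibly on `F^(ℓ^γ)`. -/
theorem stmt_7 (ℓ : ℕ) (hℓ : ℓ.Prime) [NeZero ℓ] (F : Type) [Field F]
    (ζ : F) (hζ1 : ζ ^ ℓ = 1) (hζ : ζ ≠ 1) (γ : ℕ) :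
    Algebra.adjoin F
      ({M : Matrix (Fin γ → Fin ℓ) (Fin γ → Fin ℓ) F | ∃ j, M = clockMatrix ℓ γ F ζ j} ∪
       {M : Matrix (Fin γ → Fin ℓ) (Fin γ → Fin ℓ) F | ∃ j, M = shiftMatrix ℓ γ F j}) = ⊤ := by
  have := Fact.mk hℓ
  exact stmt_7_general (IsPrimitiveRoot.iff_orderOf.mpr (orderOf_eq_prime hζ1 hζ))
end

section
/- Let F be a finite field of characteristic p, ℓ a prime different from p, b ≥ 1, and ζα ∈ F an element of multiplicative order ℓ^b; set ζ = ζα^(ℓ^(b−1)), so ζ has order ℓ. Let R be the subgroup of the unit group of Matrix ι ι F generated by the scalar matrix ζα • 1 together with the clock matrices X_j and shift matrices Y_j for all j : Fin γ (the clock matrices being formed with this ζ). Then the entrywise Frobenius map, which sends a matrix to the matrix obtained by applying x ↦ x^p to every entry (a ring endomorphism of Matrix ι ι F), maps R bijectively onto itself; in particular it sends ζα • 1 to (ζα • 1)^p, each X_j to X_j^p, and fixes each Y_j. (This is the matrix-level content of the first assertion of Lemma 6.7: field automorphisms stabilize the twisted basic subgroups.) -/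
open Matrix

/-- The twisted basic subgroup `R⁰_{1,α,γ}`: the subgroup of the unit group of the
matrix ring generated by the scalar matrix `ζα • 1` together with the clock and shift
matrices. -/
def basicSubgroup (ℓ γ : ℕ) [NeZero ℓ] (F : Type) [Field F] (ζα ζ : F) :
    Subgroup (Matrix (Fin γ → Fin ℓ) (Fin γ → Fin ℓ) F)ˣ :=
  Subgroup.closure {u : (Matrix (Fin γ → Fin ℓ) (Fin γ → Fin ℓ) F)ˣ |
    (u : Matrix (Fin γ → Fin ℓ) (Fin γ → Fin ℓ) F)
        = ζα • (1 : Matrix (Fin γ → Fin ℓ) (Fin γ → Fin ℓ) F) ∨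
    (∃ j, (u : Matrix (Fin γ → Fin ℓ) (Fin γ → Fin ℓ) F) = clockMatrix ℓ γ F ζ j) ∨
    ∃ j, (u : Matrix (Fin γ → Fin ℓ) (Fin γ → Fin ℓ) F) = shiftMatrix ℓ γ F j}

/-!
A ring endomorphism `σ` of a field sends a root of unity to one of its powers, and to one of the
same order by injectivity, so both generate the same cyclic group. Applied entrywise, `σ` raises
the scalar and clock generators to the same power as the root of unity they are built from, and it
fixes the shift matrices, whose entries are `0` and `1`. So each generator of the basic subgroup and
its image generate the same cyclic group, and the basic subgroup is mapped onto itself.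
-/

section Group

open Subgroup

variable {G : Type*} [Group G]

theorem bijOn_of_map_eq {G' : Type*} [Group G'] {f : G →* G'} (hf : Function.Injective f)
    {H : Subgroup G} {K : Subgroup G'} (h : H.map f = K) : Set.BijOn f H K := by
  simpa only [← coe_map, h] using hf.injOn.bijOn_image (s := H)

theorem map_closure_eq_of_zpowers_eq {f : G →* G} {S : Set G}
    (h : ∀ u ∈ S, zpowers (f u) = zpowers u) : (closure S).map f = closure S := by
  have zpowers_le {u : G} (hu : u ∈ S) : zpowers u ≤ closure S :=
    zpowers_le_of_mem (subset_closure hu)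
  refine le_antisymm (map_le_iff_le_comap.2 ((closure_le _).2 fun u hu => ?_))
    ((closure_le _).2 fun u hu => ?_)
  · exact zpowers_le hu (h u hu ▸ mem_zpowers (f u))
  · have hle : zpowers (f u) ≤ (closure S).map f :=
      f.map_zpowers u ▸ map_mono (zpowers_le hu)
    exact hle (h u hu ▸ mem_zpowers u)

theorem zpowers_map_eq_of_mem_zpowers {f : G →* G} (hf : Function.Injective f) {u : G}
    (hu : IsOfFinOrder u) (h : f u ∈ zpowers u) : zpowers (f u) = zpowers u := by
  have : Finite (zpowers u) := hu.finite_zpowers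
  refine eq_of_le_of_card_ge (zpowers_le_of_mem h) ?_
  rw [Nat.card_zpowers, Nat.card_zpowers, orderOf_injective f hf]

end Group

theorem exists_map_eq_pow_of_isOfFinOrder {R : Type*} [CommRing R] [IsDomain R] (σ : R →* R)
    {ζ : R} (hζ : IsOfFinOrder ζ) : ∃ m : ℕ, σ ζ = ζ ^ m := by
  have : NeZero (orderOf ζ) := ⟨hζ.orderOf_pos.ne'⟩
  exact map_rootsOfUnity_eq_pow_self σ (rootsOfUnity.mkOfPowEq ζ (pow_orderOf_eq_one ζ))

-- `D` is meant as a family of generators parametrized by a root of unity: `ζ ↦ ζ • 1` or `ζ ↦ X_j`.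
theorem zpowers_unitsMap_eq {R M : Type*} [CommRing R] [IsDomain R] [Monoid M]
    {φ : M →* M} (hφ : Function.Injective φ) {σ : R →* R} {D : R →* M} {ζ : R}
    (hζ : IsOfFinOrder ζ) (hD : φ (D ζ) = D (σ ζ)) {u : Mˣ} (hu : (u : M) = D ζ) :
    Subgroup.zpowers (Units.map φ u) = Subgroup.zpowers u := by
  obtain ⟨m, hm⟩ := exists_map_eq_pow_of_isOfFinOrder σ hζ
  have hu_fin : IsOfFinOrder u := Units.isOfFinOrder_val.1 (hu ▸ D.isOfFinOrder hζ)
  have map_u : Units.map φ u = u ^ m := by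
    ext
    rw [Units.coe_map, Units.val_pow_eq_pow_val, hu, hD, hm, map_pow]
  exact zpowers_map_eq_of_mem_zpowers (Units.map_injective hφ) hu_fin
    (map_u ▸ Subgroup.npow_mem_zpowers u m)

section MapMatrix

variable {n R S : Type*} [Fintype n] [DecidableEq n] [NonAssocSemiring R] [NonAssocSemiring S]

theorem mapMatrix_injective {σ : R →+* S} (hσ : Function.Injective σ) :
    Function.Injective (σ.mapMatrix : Matrix n n R →+* Matrix n n S) :=
  map_injective hσ

theorem mapMatrix_smul_one (σ : R →+* S) (a : R) :
    σ.mapMatrix (a • (1 : Matrix n n R)) = σ a • (1 : Matrix n n S) := by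
  simp [smul_one_eq_diagonal, diagonal_map]

end MapMatrix

section Generators

variable {ℓ γ : ℕ} {F : Type} [Field F]

/-- The clock matrix `X_j` as a multiplicative function of the parameter `ζ`. -/
def clockMatrixHom (ℓ : ℕ) (F : Type) [Field F] (j : Fin γ) :
    F →* Matrix (Fin γ → Fin ℓ) (Fin γ → Fin ℓ) F where
  toFun ζ := clockMatrix ℓ γ F ζ j
  map_one' := by simp [clockMatrix]
  map_mul' ζ η := by simp [clockMatrix, mul_pow]

theorem clockMatrix_pow (ζ : F) (j : Fin γ) (m : ℕ) :
    clockMatrix ℓ γ F (ζ ^ m) j = clockMatrix ℓ γ F ζ j ^ m :=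
  map_pow (clockMatrixHom ℓ F j) ζ m

theorem mapMatrix_clockMatrix {K : Type} [Field K] (σ : F →+* K) (ζ : F) (j : Fin γ) :
    σ.mapMatrix (clockMatrix ℓ γ F ζ j) = clockMatrix ℓ γ K (σ ζ) j := by
  simp [clockMatrix, diagonal_map]

theorem mapMatrix_shiftMatrix [NeZero ℓ] {K : Type} [Field K] (σ : F →+* K) (j : Fin γ) :
    σ.mapMatrix (shiftMatrix ℓ γ F j) = shiftMatrix ℓ γ K j := by
  ext f g
  simp [shiftMatrix, apply_ite σ]

variable [NeZero ℓ]

theorem map_basicSubgroup {ζα ζ : F} (hζα : IsOfFinOrder ζα) (hζ : IsOfFinOrder ζ)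
    (σ : F →+* F) :
    (basicSubgroup ℓ γ F ζα ζ).map (Units.map σ.mapMatrix.toMonoidHom) =
      basicSubgroup ℓ γ F ζα ζ := by
  have hσ : Function.Injective
      (σ.mapMatrix : Matrix (Fin γ → Fin ℓ) (Fin γ → Fin ℓ) F →+* _).toMonoidHom :=
    mapMatrix_injective σ.injective
  refine map_closure_eq_of_zpowers_eq ?_
  rintro u (hu | ⟨j, hu⟩ | ⟨j, hu⟩)
  · exact zpowers_unitsMap_eq (σ := σ) (D := MonoidHom.smulOneHom) hσ hζα
      (mapMatrix_smul_one σ ζα) hu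
  · exact zpowers_unitsMap_eq (σ := σ) (D := clockMatrixHom ℓ F j) hσ hζ
      (mapMatrix_clockMatrix σ ζ j) hu
  · have map_u : Units.map σ.mapMatrix.toMonoidHom u = u :=
      Units.ext <| (congrArg σ.mapMatrix hu).trans <| (mapMatrix_shiftMatrix σ j).trans hu.symm
    rw [map_u]

theorem stmt_8_general {ζα ζ : F} (hζα : IsOfFinOrder ζα) (hζ : IsOfFinOrder ζ) (σ : F →+* F) :
    Set.BijOn (Units.map σ.mapMatrix.toMonoidHom)
      (basicSubgroup ℓ γ F ζα ζ : Set (Matrix (Fin γ → Fin ℓ) (Fin γ → Fin ℓ) F)ˣ)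
      (basicSubgroup ℓ γ F ζα ζ : Set (Matrix (Fin γ → Fin ℓ) (Fin γ → Fin ℓ) F)ˣ) ∧
    σ.mapMatrix (ζα • (1 : Matrix (Fin γ → Fin ℓ) (Fin γ → Fin ℓ) F))
      = σ ζα • (1 : Matrix (Fin γ → Fin ℓ) (Fin γ → Fin ℓ) F) ∧
    (∀ j, σ.mapMatrix (clockMatrix ℓ γ F ζ j) = clockMatrix ℓ γ F (σ ζ) j) ∧
    ∀ j, σ.mapMatrix (shiftMatrix ℓ γ F j) = shiftMatrix ℓ γ F j := by
  have bijOn_basicSubgroup := bijOn_of_map_eq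
    (Units.map_injective (mapMatrix_injective σ.injective))
    (map_basicSubgroup (ℓ := ℓ) (γ := γ) hζα hζ σ)
  exact ⟨bijOn_basicSubgroup, mapMatrix_smul_one σ ζα, mapMatrix_clockMatrix σ ζ,
    mapMatrix_shiftMatrix σ⟩

end Generators

/-- Let `F` be a finite field of characteristic `p`, `ℓ` a prime
different from `p`, `b ≥ 1`, `ζα ∈ F` of multiplicative order `ℓ^b`, and
`ζ = ζα^(ℓ^(b-1))` of order `ℓ`.  The entrywise Frobenius map `Φ` (the ring
endomorphism of the matrix ring applying `x ↦ x^p` to every entry) maps the basic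
subgroup `R` generated by `ζα • 1` and the clock and shift matrices bijectively onto
itself; in particular it sends `ζα • 1` to `(ζα • 1)^p`, each `X_j` to `X_j^p`, and
fixes each `Y_j`. -/
theorem stmt_8 (p ℓ : ℕ) (hp : p.Prime) (hℓ : ℓ.Prime) (hℓp : ℓ ≠ p) [NeZero ℓ]
    (F : Type) [Field F] [Fintype F] [CharP F p]
    (b : ℕ) (hb : 1 ≤ b) (ζα : F) (hζα : orderOf ζα = ℓ ^ b)
    (ζ : F) (hζ : ζ = ζα ^ ℓ ^ (b - 1)) (γ : ℕ)
    (Φ : Matrix (Fin γ → Fin ℓ) (Fin γ → Fin ℓ) F →+*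
         Matrix (Fin γ → Fin ℓ) (Fin γ → Fin ℓ) F)
    (hΦ : ∀ A : Matrix (Fin γ → Fin ℓ) (Fin γ → Fin ℓ) F, Φ A = A.map fun x => x ^ p) :
    Set.BijOn (Units.map Φ.toMonoidHom)
      (basicSubgroup ℓ γ F ζα ζ : Set (Matrix (Fin γ → Fin ℓ) (Fin γ → Fin ℓ) F)ˣ)
      (basicSubgroup ℓ γ F ζα ζ : Set (Matrix (Fin γ → Fin ℓ) (Fin γ → Fin ℓ) F)ˣ) ∧
    Φ (ζα • (1 : Matrix (Fin γ → Fin ℓ) (Fin γ → Fin ℓ) F))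
      = (ζα • (1 : Matrix (Fin γ → Fin ℓ) (Fin γ → Fin ℓ) F)) ^ p ∧
    (∀ j, Φ (clockMatrix ℓ γ F ζ j) = clockMatrix ℓ γ F ζ j ^ p) ∧
    ∀ j, Φ (shiftMatrix ℓ γ F j) = shiftMatrix ℓ γ F j := by
  have : Fact p.Prime := ⟨hp⟩
  obtain rfl : Φ = (frobenius F p).mapMatrix := RingHom.ext hΦ
  have hζα_fin : IsOfFinOrder ζα := orderOf_pos_iff.1 (hζα ▸ pow_pos hℓ.pos b)
  simpa only [frobenius_def, smul_pow, one_pow, clockMatrix_pow] using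
    stmt_8_general hζα_fin (hζ ▸ hζα_fin.pow) (frobenius F p)
end

section
/- Let A be a finite abelian group, B a subgroup of A, θ : B →* ℂˣ a homomorphism, and τ an automorphism of A such that τ(b) = b for all b ∈ B and τ(a) * a⁻¹ ∈ B for all a ∈ A. Define λ : A → ℂˣ by λ(a) = θ(τ(a) * a⁻¹). Then: (1) λ is a group homomorphism which is trivial on B; (2) for every homomorphism θ̃ : A →* ℂˣ extending θ, the composite θ̃ ∘ τ is again an extension of θ and satisfies θ̃ ∘ τ = λ * θ̃ (pointwise product); (3) consequently, every extension of θ to A is fixed by precomposition with τ if and only if λ is the trivial homomorphism, and if λ * λ = 1 with λ ≠ 1 then the map θ̃ ↦ θ̃ ∘ τ is a fixed-point-free involution on the set of extensions of θ to A, so the extensions are partitioned into pairs swapped by τ. (This is the abstract mechanism behind Lemmas 6.13–6.16: the diagonal automorphism τ fixes all extensions of θ_{Γ,γ} for Γ ≠ X+1 and interchanges the 2e extensions of θ_{X+1,γ} in e pairs.) -/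
/-!
For `a : A` and an extension `θt` of `θ`, writing `τ a = (τ a * a⁻¹) * a` with the first factor in
`B` gives `θt ∘ τ = lam * θt`. So precomposition with `τ` acts on the extensions of `θ` as
multiplication by the fixed character `lam`, which fixes either all of them or none. Extensions
exist because `ℂˣ` is divisible.
-/

theorem units_pow_surjective {K : Type*} [Field K] [IsAlgClosed K] {n : ℕ} (hn : n ≠ 0) :
    Function.Surjective fun u : Kˣ ↦ u ^ n := by
  intro u
  obtain ⟨z, hz⟩ := IsAlgClosed.exists_pow_nat_eq (u : K) (Nat.pos_of_ne_zero hn)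
  have hz₀ : z ≠ 0 := by
    rintro rfl
    exact u.ne_zero (by rw [← hz, zero_pow hn])
  exact ⟨Units.mk0 z hz₀, Units.ext hz⟩

noncomputable instance instRootableByUnits {K : Type*} [Field K] [IsAlgClosed K] :
    RootableBy Kˣ ℕ :=
  rootableByOfPowLeftSurj Kˣ ℕ units_pow_surjective

theorem exists_monoidHom_comp_eq_of_injective {A C G : Type*} [CommGroup A] [CommGroup C]
    [CommGroup G] [RootableBy G ℕ] {f : C →* A} (hf : Function.Injective f) (θ : C →* G) :
    ∃ θt : A →* G, θt.comp f = θ := by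
  let _ : DivisibleBy (Additive G) ℕ :=
    divisibleByOfSMulRightSurj (Additive G) ℕ (RootableBy.surjective_pow G ℕ)
  let _ : DivisibleBy (Additive G) ℤ := AddGroup.divisibleByIntOfDivisibleByNat (Additive G)
  obtain ⟨φ, hφ⟩ := (Module.Baer.of_divisible (Additive G)).extension_property_addMonoidHom
    f.toAdditive hf θ.toAdditive
  exact ⟨MonoidHom.toAdditive.symm φ, MonoidHom.toAdditive.injective hφ⟩

theorem extension_comp_apply {A M : Type*} [Group A] [MulOneClass M] {B : Subgroup A}
    {τ : A →* A} {θ : B →* M} {θt : A →* M} (hτB : ∀ b : B, τ b = b)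
    (hθt : ∀ b : B, θt b = θ b) (b : B) : θt.comp τ b = θ b := by
  rw [MonoidHom.comp_apply, hτB, hθt]

section DisplacementHom

variable {A M : Type*} [CommGroup A] {B : Subgroup A} {τ : A →* A}

/-- The homomorphism `a ↦ θ (τ a * a⁻¹)` on `A`, for `θ` defined on `B` and `τ` an endomorphism of
`A` that is trivial modulo `B`: the factor by which `τ` changes an extension of `θ`. -/
def displacementHom [MulOneClass M] (θ : B →* M) (τ : A →* A)
    (hτA : ∀ a, τ a * a⁻¹ ∈ B) : A →* M :=
  θ.comp ((τ * (MonoidHom.id A)⁻¹).codRestrict B hτA)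

theorem displacementHom_apply [MulOneClass M] (θ : B →* M)
    (hτA : ∀ a, τ a * a⁻¹ ∈ B) (a : A) :
    displacementHom θ τ hτA a = θ ⟨τ a * a⁻¹, hτA a⟩ :=
  rfl

theorem displacementHom_apply_of_map_eq_self [MulOneClass M] (θ : B →* M)
    (hτA : ∀ a, τ a * a⁻¹ ∈ B) {a : A} (ha : τ a = a) :
    displacementHom θ τ hτA a = 1 := by
  have h_one : (⟨τ a * a⁻¹, hτA a⟩ : B) = 1 := Subtype.ext (by simp [ha])
  rw [displacementHom_apply, h_one, map_one]

theorem comp_eq_displacementHom_mul [CommMonoid M] {θ : B →* M} {θt : A →* M}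
    (hτA : ∀ a, τ a * a⁻¹ ∈ B) (hθt : ∀ b : B, θt b = θ b) :
    θt.comp τ = displacementHom θ τ hτA * θt := by
  ext1 a
  calc
    θt (τ a) = θt (τ a * a⁻¹) * θt a := by rw [← map_mul, inv_mul_cancel_right]
    _ = displacementHom θ τ hτA a * θt a := by rw [displacementHom_apply, ← hθt]

theorem comp_eq_self_iff_displacementHom_eq_one [CommGroup M] {θ : B →* M} {θt : A →* M}
    (hτA : ∀ a, τ a * a⁻¹ ∈ B) (hθt : ∀ b : B, θt b = θ b) :
    θt.comp τ = θt ↔ displacementHom θ τ hτA = 1 := by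
  rw [comp_eq_displacementHom_mul hτA hθt, mul_eq_right]

theorem comp_comp_eq_self_of_displacementHom_mul_self_eq_one [CommMonoid M] {θ : B →* M}
    {θt : A →* M} (hτB : ∀ b : B, τ b = b) (hτA : ∀ a, τ a * a⁻¹ ∈ B)
    (hθt : ∀ b : B, θt b = θ b)
    (hsq : displacementHom θ τ hτA * displacementHom θ τ hτA = 1) :
    (θt.comp τ).comp τ = θt := by
  rw [comp_eq_displacementHom_mul hτA (extension_comp_apply hτB hθt),
    comp_eq_displacementHom_mul hτA hθt, ← mul_assoc, hsq, one_mul]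

theorem forall_extension_comp_eq_self_iff_displacementHom_eq_one [CommGroup M] [RootableBy M ℕ]
    (θ : B →* M) (hτA : ∀ a, τ a * a⁻¹ ∈ B) :
    (∀ θt : A →* M, (∀ b : B, θt b = θ b) → θt.comp τ = θt) ↔
      displacementHom θ τ hτA = 1 := by
  constructor
  · intro hfix
    obtain ⟨θt, hθt⟩ := exists_monoidHom_comp_eq_of_injective B.subtype_injective θ
    have hext : ∀ b : B, θt b = θ b := DFunLike.congr_fun hθt
    exact (comp_eq_self_iff_displacementHom_eq_one hτA hext).mp (hfix θt hext)
  · exact fun hone θt hθt ↦ (comp_eq_self_iff_displacementHom_eq_one hτA hθt).mpr hone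

end DisplacementHom

theorem stmt_9_general {A G : Type*} [CommGroup A] [CommGroup G] [RootableBy G ℕ]
    (B : Subgroup A) (θ : B →* G) (τ : A →* A)
    (hτB : ∀ b : B, τ (b : A) = (b : A)) (hτA : ∀ a : A, τ a * a⁻¹ ∈ B)
    (lam : A → G) (hlam : ∀ a : A, lam a = θ ⟨τ a * a⁻¹, hτA a⟩) :
    ((∀ a a' : A, lam (a * a') = lam a * lam a') ∧ ∀ b : B, lam (b : A) = 1) ∧
    (∀ θt : A →* G, (∀ b : B, θt (b : A) = θ b) →
      ((∀ b : B, θt (τ (b : A)) = θ b) ∧ ∀ a : A, θt (τ a) = lam a * θt a)) ∧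
    ((∀ θt : A →* G, (∀ b : B, θt (b : A) = θ b) → ∀ a : A, θt (τ a) = θt a) ↔
      ∀ a : A, lam a = 1) ∧
    ((∀ a : A, lam a * lam a = 1) → (lam ≠ fun _ => 1) →
      ∀ θt : A →* G, (∀ b : B, θt (b : A) = θ b) →
        (∀ b : B, (θt.comp τ) (b : A) = θ b) ∧
        (θt.comp τ).comp τ = θt ∧
        θt.comp τ ≠ θt) := by
  obtain rfl : lam = displacementHom θ τ hτA := funext hlam
  refine ⟨⟨map_mul _, fun b ↦ displacementHom_apply_of_map_eq_self θ hτA (hτB b)⟩,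
    fun θt hθt ↦ ⟨extension_comp_apply hτB hθt,
      DFunLike.congr_fun (comp_eq_displacementHom_mul hτA hθt)⟩, ?_, ?_⟩
  · simpa only [DFunLike.ext_iff, MonoidHom.comp_apply, MonoidHom.one_apply] using
      forall_extension_comp_eq_self_iff_displacementHom_eq_one θ hτA
  · intro hsq hne θt hθt
    refine ⟨extension_comp_apply hτB hθt,
      comp_comp_eq_self_of_displacementHom_mul_self_eq_one hτB hτA hθt (MonoidHom.ext hsq), ?_⟩
    intro hfixed
    exact hne (congrArg DFunLike.coe
      ((comp_eq_self_iff_displacementHom_eq_one hτA hθt).mp hfixed))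

/-- Let `A` be a finite abelian group, `B ≤ A`, `θ : B →* ℂˣ`, and
`τ` an automorphism of `A` fixing `B` pointwise with `τ(a)⁻¹·a ∈ B` for all `a`.
Let `λ(a) = θ(τ(a)·a⁻¹)`.  Then (1) `λ` is a homomorphism trivial on `B`;
(2) for every extension `θ̃` of `θ` to `A`, `θ̃ ∘ τ` is again an extension and
`θ̃ ∘ τ = λ · θ̃`; (3) every extension is fixed by precomposition with `τ` iff `λ` is
trivial, and if `λ² = 1` with `λ ≠ 1` then `θ̃ ↦ θ̃ ∘ τ` is a fixed-point-free
involution on the set of extensions of `θ`. -/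
theorem stmt_9 (A : Type) [CommGroup A] [Finite A] (B : Subgroup A)
    (θ : B →* ℂˣ) (τ : A ≃* A)
    (hτB : ∀ b : B, τ (b : A) = (b : A)) (hτA : ∀ a : A, τ a * a⁻¹ ∈ B)
    (lam : A → ℂˣ) (hlam : ∀ a : A, lam a = θ ⟨τ a * a⁻¹, hτA a⟩) :
    ((∀ a a' : A, lam (a * a') = lam a * lam a') ∧ ∀ b : B, lam (b : A) = 1) ∧
    (∀ θt : A →* ℂˣ, (∀ b : B, θt (b : A) = θ b) →
      ((∀ b : B, θt (τ (b : A)) = θ b) ∧ ∀ a : A, θt (τ a) = lam a * θt a)) ∧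
    ((∀ θt : A →* ℂˣ, (∀ b : B, θt (b : A) = θ b) → ∀ a : A, θt (τ a) = θt a) ↔
      ∀ a : A, lam a = 1) ∧
    ((∀ a : A, lam a * lam a = 1) → (lam ≠ fun _ => 1) →
      ∀ θt : A →* ℂˣ, (∀ b : B, θt (b : A) = θ b) →
        (∀ b : B, (θt.comp τ.toMonoidHom) (b : A) = θ b) ∧
        (θt.comp τ.toMonoidHom).comp τ.toMonoidHom = θt ∧
        θt.comp τ.toMonoidHom ≠ θt) :=
  stmt_9_general B θ τ.toMonoidHom hτB hτA lam hlam
end
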